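/- arXiv:1008.0825 — 5 statements merged into one kernel-verified Lean document; each statement's English description precedes it below -/
import Mathlib

section
/- For every odd integer n ≥ 3 there exists a matrix γ in SL(2, ℤ[i]) (2×2 matrices over the Gaussian integers with determinant 1) whose norm squared equals n, i.e. ‖γ‖² = |a|² + |b|² + |c|² + |d|² = n where a, b, c, d are the entries of γ and |·|² denotes the complex absolute value squared (so |a|² = a₁² + a₂² for a = a₁ + i a₂). -/
open Matrix

/-!
The matrices `γ * γᴴ` with `γ ∈ SL(2, ℤ[i])` have trace `‖γ‖²`, and by descent on the first
diagonal entry they are exactly the positive definite Hermitian matrices `!![p, w; star w, q]` with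
`p * q = 1 + |w|²`. Asking for `p + q = n` turns this equation into
`n² - 4 = (p - q)² + 4 * |w|²`, so it suffices to write `n² - 4`, which is `1` modulo `4`, as a sum
of three squares.

For that, positive definite ternary forms of determinant one over `ℤ` are equivalent to
`x² + y² + z²`, by reducing a binary section of the form and one of its adjugate in turn.
Dirichlet's theorem supplies `d` and a prime `p` with `d * N = 2 * p + 1` and `d ≡ 3 [MOD 8]`, for
which `-d` is a square modulo `2 * p` by quadratic reciprocity; this yields such a form with the
value `N`.
-/

open scoped MatrixGroups NumberTheorySymbols

theorem exists_two_mul_abs_add_mul_le (f : ℤ) {a : ℤ} (ha : 0 < a) :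
    ∃ k : ℤ, 2 * |f + k * a| ≤ a := by
  lift a to ℕ using ha.le
  have h_pos : 0 < a := by exact_mod_cast ha
  refine ⟨-f.bdiv a, ?_⟩
  rw [neg_mul, ← sub_eq_add_neg, ← Int.bmod_eq_self_sub_bdiv_mul]
  have h_le := Int.bmod_le (x := f) h_pos
  have h_ge := Int.le_bmod (x := f) h_pos
  rcases abs_cases (f.bmod a) with ⟨h, -⟩ | ⟨h, -⟩ <;> omega

section UnimodularGram

variable {n R : Type*} [Fintype n] [DecidableEq n] [CommRing R] [StarRing R]

/-- The Gram matrix, with respect to the rows of `g`, of the Hermitian form with matrix `A`. Base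
change by `g` preserves the equivalence class of the form. -/
def baseChange (g : SpecialLinearGroup n R) (A : Matrix n n R) : Matrix n n R :=
  g.1 * A * g.1ᴴ

theorem baseChange_apply (g : SpecialLinearGroup n R) (A : Matrix n n R) (i j : n) :
    baseChange g A i j = ∑ k, ∑ l, g.1 i k * A k l * star (g.1 j l) := by
  simp only [baseChange, mul_apply, conjTranspose_apply, Finset.sum_mul]
  exact Finset.sum_comm

theorem det_baseChange (g : SpecialLinearGroup n R) (A : Matrix n n R) :
    (baseChange g A).det = A.det := by
  simp [baseChange]

theorem posDef_baseChange [PartialOrder R] (g : SpecialLinearGroup n R) {A : Matrix n n R}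
    (hA : A.PosDef) : (baseChange g A).PosDef := by
  have h_unit : IsUnit g.1 := (Matrix.isUnit_iff_isUnit_det _).2 (by simp)
  exact h_unit.posDef_star_right_conjugate_iff.2 hA

theorem posDef_adjugate [PartialOrder R] {A : Matrix n n R} (hA : A.PosDef)
    (hdet : A.det = 1) : A.adjugate.PosDef := by
  have h_eq : baseChange ⟨A.adjugate, by simp [det_adjugate, hdet]⟩ A = A.adjugate := by
    change A.adjugate * A * A.adjugateᴴ = _
    rw [adjugate_mul, hdet, one_smul, Matrix.one_mul, adjugate_conjTranspose,
      hA.isHermitian.eq]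
  exact h_eq ▸ posDef_baseChange _ hA

/-- `A` is the Gram matrix of the rows of a matrix of determinant one; equivalently, the Hermitian
form with matrix `A` is equivalent to the standard one. It expresses the
conclusion of reduction theory both for ternary forms over `ℤ`, where `star` is trivial, and for
binary Hermitian forms over `ℤ[i]`. -/
def IsUnimodularGram (A : Matrix n n R) : Prop :=
  ∃ γ : SpecialLinearGroup n R, γ.1 * γ.1ᴴ = A

theorem IsUnimodularGram.of_baseChange {A : Matrix n n R} (g : SpecialLinearGroup n R)
    (h : IsUnimodularGram (baseChange g A)) : IsUnimodularGram A := by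
  obtain ⟨γ, hγ⟩ := h
  have h_inv : (g⁻¹).1 * g.1 = 1 := congrArg Subtype.val (inv_mul_cancel g)
  refine ⟨g⁻¹ * γ, ?_⟩
  calc (g⁻¹ * γ).1 * (g⁻¹ * γ).1ᴴ
      = (g⁻¹).1 * (γ.1 * γ.1ᴴ) * (g⁻¹).1ᴴ := by
        change (g⁻¹).1 * γ.1 * ((g⁻¹).1 * γ.1)ᴴ = _
        simp only [conjTranspose_mul, Matrix.mul_assoc]
    _ = ((g⁻¹).1 * g.1) * A * ((g⁻¹).1 * g.1)ᴴ := by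
        simp only [hγ, baseChange, conjTranspose_mul, Matrix.mul_assoc]
    _ = A := by rw [h_inv, conjTranspose_one, Matrix.one_mul, Matrix.mul_one]

theorem IsUnimodularGram.exists_diag_eq_sum_sq [TrivialStar R] {A : Matrix n n R}
    (h : IsUnimodularGram A) (i : n) : ∃ v : n → R, A i i = ∑ j, v j ^ 2 := by
  obtain ⟨γ, rfl⟩ := h
  exact ⟨γ.1 i, by simp [mul_apply, sq]⟩

end UnimodularGram

section FinThree

variable {R : Type*} [CommRing R]

theorem adjugate_fin_three_two_two (A : Matrix (Fin 3) (Fin 3) R) :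
    A.adjugate 2 2 = A 0 0 * A 1 1 - A 0 1 * A 1 0 := by
  simp [adjugate_fin_three]

theorem adjugate_fin_three_minor (A : Matrix (Fin 3) (Fin 3) R) :
    A.adjugate 1 1 * A.adjugate 2 2 - A.adjugate 1 2 * A.adjugate 2 1 = A 0 0 * A.det := by
  simp only [adjugate_fin_three, det_fin_three, of_apply, cons_val', cons_val_fin_one, cons_val]
  ring

theorem posDef_fin_three_of_minors_pos [LinearOrder R] [IsStrictOrderedRing R] [StarRing R]
    [TrivialStar R] {A : Matrix (Fin 3) (Fin 3) R} (hA : A.IsHermitian) (h₁ : 0 < A 0 0)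
    (h₂ : 0 < A.adjugate 2 2) (h₃ : 0 < A.det) : A.PosDef := by
  refine .of_dotProduct_mulVec_pos hA fun x hx ↦ ?_
  have h10 : A 1 0 = A 0 1 := by simpa using hA.apply 0 1
  have h20 : A 2 0 = A 0 2 := by simpa using hA.apply 0 2
  have h21 : A 2 1 = A 1 2 := by simpa using hA.apply 1 2
  set y₀ := A 0 0 * x 0 + A 0 1 * x 1 + A 0 2 * x 2 with hy₀
  set y₁ := A.adjugate 2 2 * x 1 - A.adjugate 1 2 * x 2 with hy₁
  have h_complete : A 0 0 * A.adjugate 2 2 * (star x ⬝ᵥ A *ᵥ x) =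
      A.adjugate 2 2 * y₀ ^ 2 + y₁ ^ 2 + A 0 0 * A.det * x 2 ^ 2 := by
    simp only [y₀, y₁, adjugate_fin_three, det_fin_three, dotProduct, mulVec, Fin.sum_univ_three,
      Pi.star_apply, star_trivial, h10, h20, h21, of_apply, cons_val', cons_val_fin_one, cons_val]
    ring
  refine pos_of_mul_pos_right (a := A 0 0 * A.adjugate 2 2) ?_ (by positivity)
  rw [h_complete]
  by_cases hx2 : x 2 = 0
  · by_cases hx1 : x 1 = 0
    · have hx0 : x 0 ≠ 0 := fun hx0 ↦ hx (by ext i; fin_cases i <;> assumption)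
      have : y₀ ≠ 0 := by simp [hy₀, hx1, hx2, h₁.ne', hx0]
      positivity
    · have : y₁ ≠ 0 := by simp [hy₁, hx2, h₂.ne', hx1]
      positivity
  · positivity

end FinThree

section BinaryReduction

variable {R : Type*} [CommRing R] [LinearOrder R] [IsStrictOrderedRing R]

theorem four_mul_sq_le_sq_of_two_mul_abs_le {a f : R} (h : 2 * |f| ≤ a) : 4 * f ^ 2 ≤ a ^ 2 :=
  calc 4 * f ^ 2 = (2 * |f|) ^ 2 := by rw [mul_pow, sq_abs]; norm_num
    _ ≤ a ^ 2 := by gcongr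

theorem three_mul_sq_le_of_two_mul_abs_le {a b f : R} (hf : 2 * |f| ≤ a) (hab : a ≤ b) :
    3 * a ^ 2 ≤ 4 * (a * b - f ^ 2) := by
  have ha : 0 ≤ a := le_trans (by positivity) hf
  have h_mul : a * a ≤ a * b := mul_le_mul_of_nonneg_left hab ha
  linarith [four_mul_sq_le_sq_of_two_mul_abs_le hf]

end BinaryReduction

theorem eq_one_of_three_mul_sq_le {a b : ℤ} (ha : 0 < a) (hb : 0 < b)
    (hab : 3 * a ^ 2 ≤ 4 * b) (hba : 3 * b ^ 2 ≤ 4 * a) : a = 1 ∧ b = 1 := by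
  have h_add : a + b < 3 := by nlinarith [sq_nonneg (a - b)]
  omega

section ElementaryBaseChange

variable {R : Type*} [CommRing R]

/-- The base change adding `l` times the first basis vector to the second and `k` times the second
to the third. It translates the off-diagonal coefficients that reduction makes small, while fixing
the leading minors `A 0 0` and `A.adjugate 2 2`. -/
def shear (l k : R) : SL(3, R) :=
  ⟨!![1, 0, 0; l, 1, 0; 0, k, 1], by simp [det_fin_three]⟩

/-- The exchange of the first two basis vectors, with a sign that makes the determinant one. It
moves `A 1 1` to the leading position. -/
def swap₀₁ : SL(3, R) :=
  ⟨!![0, 1, 0; -1, 0, 0; 0, 0, 1], by simp [det_fin_three]⟩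

/-- The exchange of the last two basis vectors, with a sign that makes the determinant one. It
moves `A.adjugate 1 1` to the position of the leading minor `A.adjugate 2 2`. -/
def swap₁₂ : SL(3, R) :=
  ⟨!![1, 0, 0; 0, 0, 1; 0, -1, 0], by simp [det_fin_three]⟩

theorem coe_shear (l k : R) : (shear l k).1 = !![1, 0, 0; l, 1, 0; 0, k, 1] := rfl

theorem coe_swap₀₁ : (swap₀₁ : SL(3, R)).1 = !![0, 1, 0; -1, 0, 0; 0, 0, 1] := rfl

theorem coe_swap₁₂ : (swap₁₂ : SL(3, R)).1 = !![1, 0, 0; 0, 0, 1; 0, -1, 0] := rfl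

variable [StarRing R] [TrivialStar R] (l k : R) (A : Matrix (Fin 3) (Fin 3) R)

theorem baseChange_shear_zero_zero : baseChange (shear l k) A 0 0 = A 0 0 := by
  simp [baseChange_apply, coe_shear, Fin.sum_univ_three]

theorem baseChange_shear_zero_one :
    baseChange (shear l k) A 0 1 = A 0 1 + l * A 0 0 := by
  simp only [baseChange_apply, coe_shear, Fin.sum_univ_three, star_trivial, of_apply, cons_val',
    cons_val_fin_one, cons_val]
  ring

theorem adjugate_baseChange_shear_two_two :
    (baseChange (shear l k) A).adjugate 2 2 = A.adjugate 2 2 := by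
  simp only [adjugate_fin_three, baseChange_apply, coe_shear, Fin.sum_univ_three, star_trivial,
    of_apply, cons_val', cons_val_fin_one, cons_val]
  ring

theorem adjugate_baseChange_shear_one_two :
    (baseChange (shear l k) A).adjugate 1 2 = A.adjugate 1 2 - k * A.adjugate 2 2 := by
  simp only [adjugate_fin_three, baseChange_apply, coe_shear, Fin.sum_univ_three, star_trivial,
    of_apply, cons_val', cons_val_fin_one, cons_val]
  ring

theorem baseChange_swap₀₁_zero_zero : baseChange swap₀₁ A 0 0 = A 1 1 := by
  simp [baseChange_apply, coe_swap₀₁, Fin.sum_univ_three]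

theorem adjugate_baseChange_swap₀₁_two_two :
    (baseChange swap₀₁ A).adjugate 2 2 = A.adjugate 2 2 := by
  simp only [adjugate_fin_three, baseChange_apply, coe_swap₀₁, Fin.sum_univ_three, star_trivial,
    of_apply, cons_val', cons_val_fin_one, cons_val]
  ring

theorem baseChange_swap₁₂_zero_zero : baseChange swap₁₂ A 0 0 = A 0 0 := by
  simp [baseChange_apply, coe_swap₁₂, Fin.sum_univ_three]

theorem adjugate_baseChange_swap₁₂_two_two :
    (baseChange swap₁₂ A).adjugate 2 2 = A.adjugate 1 1 := by
  simp [baseChange_apply, coe_swap₁₂, adjugate_fin_three, Fin.sum_univ_three]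

end ElementaryBaseChange

section Ternary

/-- A symmetric integral ternary form is reduced when its leading binary form, with coefficients
`A 0 0`, `A 0 1`, `A 1 1`, and the trailing binary form of its adjugate, with coefficients
`A.adjugate 2 2`, `A.adjugate 1 2`, `A.adjugate 1 1`, are both reduced. A positive definite form
of determinant one that satisfies these inequalities can be written down explicitly. -/
structure IsReducedTernary (A : Matrix (Fin 3) (Fin 3) ℤ) : Prop where
  two_mul_abs_le : 2 * |A 0 1| ≤ A 0 0
  diag_le : A 0 0 ≤ A 1 1
  two_mul_abs_adjugate_le : 2 * |A.adjugate 1 2| ≤ A.adjugate 2 2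
  adjugate_le : A.adjugate 2 2 ≤ A.adjugate 1 1

theorem IsReducedTernary.isUnimodularGram {A : Matrix (Fin 3) (Fin 3) ℤ}
    (h : IsReducedTernary A) (hA : A.PosDef) (hdet : A.det = 1) : IsUnimodularGram A := by
  have hadj := posDef_adjugate hA hdet
  have h10 : A 1 0 = A 0 1 := hA.isHermitian.apply 0 1
  have h20 : A 2 0 = A 0 2 := hA.isHermitian.apply 0 2
  have h21 : A 2 1 = A 1 2 := hA.isHermitian.apply 1 2
  have hadj21 : A.adjugate 2 1 = A.adjugate 1 2 := hadj.isHermitian.apply 1 2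
  have h_minor : A.adjugate 2 2 = A 0 0 * A 1 1 - A 0 1 ^ 2 := by
    rw [adjugate_fin_three_two_two, h10, sq]
  have h_adj_minor : A 0 0 = A.adjugate 2 2 * A.adjugate 1 1 - A.adjugate 1 2 ^ 2 := by
    linear_combination (-A 0 0) * hdet - adjugate_fin_three_minor A - A.adjugate 1 2 * hadj21
  obtain ⟨h00, hadj22⟩ : A 0 0 = 1 ∧ A.adjugate 2 2 = 1 :=
    eq_one_of_three_mul_sq_le hA.diag_pos hadj.diag_pos
      (h_minor ▸ three_mul_sq_le_of_two_mul_abs_le h.two_mul_abs_le h.diag_le)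
      (h_adj_minor ▸ three_mul_sq_le_of_two_mul_abs_le h.two_mul_abs_adjugate_le h.adjugate_le)
  have h01 : A 0 1 = 0 := Int.abs_lt_one_iff.1 (by linarith [h.two_mul_abs_le])
  have hadj12 : A.adjugate 1 2 = 0 :=
    Int.abs_lt_one_iff.1 (by linarith [h.two_mul_abs_adjugate_le])
  have h11 : A 1 1 = 1 := by simpa [h00, h01, hadj22] using h_minor.symm
  have h12 : A 1 2 = 0 := by simpa [adjugate_fin_three, h00, h10, h01] using hadj12
  have h22 : A 2 2 = A 0 2 ^ 2 + 1 := by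
    rw [det_fin_three, h10, h20, h21, h00, h01, h11, h12] at hdet
    linarith
  refine ⟨⟨!![1, 0, 0; 0, 1, 0; A 0 2, 0, 1], by simp [det_fin_three]⟩, ?_⟩
  ext i j
  fin_cases i <;> fin_cases j <;>
    simp [mul_apply, Fin.sum_univ_three, h00, h01, h10, h11, h12, h20, h21, h22, sq]

-- Each swap lowers one of `A 0 0`, `A.adjugate 2 2` and fixes the other, so their sum descends.
theorem isUnimodularGram_of_posDef {A : Matrix (Fin 3) (Fin 3) ℤ} (hA : A.PosDef)
    (hdet : A.det = 1) : IsUnimodularGram A := by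
  induction hN : (A 0 0 + A.adjugate 2 2).toNat using Nat.strong_induction_on generalizing A with
  | _ N ih
  have h00 : 0 < A 0 0 := hA.diag_pos
  have h22 : 0 < A.adjugate 2 2 := (posDef_adjugate hA hdet).diag_pos
  obtain ⟨l, hl⟩ := exists_two_mul_abs_add_mul_le (A 0 1) h00
  obtain ⟨k, hk⟩ := exists_two_mul_abs_add_mul_le (A.adjugate 1 2) h22
  refine .of_baseChange (shear l (-k)) ?_
  set B := baseChange (shear l (-k)) A with hB
  have hB_pos : B.PosDef := posDef_baseChange _ hA
  have hB_det : B.det = 1 := (det_baseChange _ A).trans hdet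
  have hB00 : B 0 0 = A 0 0 := baseChange_shear_zero_zero ..
  have hB22 : B.adjugate 2 2 = A.adjugate 2 2 := adjugate_baseChange_shear_two_two ..
  rcases lt_or_ge (B 1 1) (B 0 0) with h_lt | h_le
  · refine .of_baseChange swap₀₁ (ih _ ?_ (posDef_baseChange _ hB_pos)
      ((det_baseChange _ B).trans hB_det) rfl)
    rw [baseChange_swap₀₁_zero_zero, adjugate_baseChange_swap₀₁_two_two]
    omega
  rcases lt_or_ge (B.adjugate 1 1) (B.adjugate 2 2) with h_adj_lt | h_adj_le
  · refine .of_baseChange swap₁₂ (ih _ ?_ (posDef_baseChange _ hB_pos)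
      ((det_baseChange _ B).trans hB_det) rfl)
    rw [baseChange_swap₁₂_zero_zero, adjugate_baseChange_swap₁₂_two_two]
    omega
  have hB_red : IsReducedTernary B :=
    { two_mul_abs_le := by rwa [hB00, hB, baseChange_shear_zero_one]
      diag_le := h_le
      two_mul_abs_adjugate_le := by
        rwa [hB22, hB, adjugate_baseChange_shear_one_two, neg_mul, sub_neg_eq_add]
      adjugate_le := h_adj_le }
  exact hB_red.isUnimodularGram hB_pos hB_det

end Ternary

section SumThreeSquares

theorem jacobiSym_neg_eq_of_mod_four_eq_three {a b : ℕ} (ha : a % 4 = 3) (hb : Odd b) :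
    J(-a | b) = J(b | a) := by
  have ha_odd : Odd a := Nat.odd_iff.2 (by omega)
  rw [jacobiSym.neg _ hb]
  rcases Nat.odd_mod_four_iff.1 (Nat.odd_iff.1 hb) with hb1 | hb3
  · rw [ZMod.χ₄_nat_one_mod_four hb1, one_mul,
      jacobiSym.quadratic_reciprocity_one_mod_four' ha_odd hb1]
  · rw [ZMod.χ₄_nat_three_mod_four hb3, jacobiSym.quadratic_reciprocity_three_mod_four ha hb3,
      neg_one_mul, neg_neg]

theorem jacobiSym_eq_one_of_dvd_two_mul_add_one {d p : ℕ} (hd : d % 8 = 3)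
    (h : d ∣ 2 * p + 1) : J(p | d) = 1 := by
  have hd_odd : Odd d := Nat.odd_iff.2 (by omega)
  have h_two : J(2 | d) = -1 := by
    rw [jacobiSym.at_two hd_odd, ZMod.χ₈_nat_eq_if_mod_eight, if_neg (by omega),
      if_neg (by omega)]
  have h_neg_one : J(-1 | d) = -1 := by
    rw [jacobiSym.at_neg_one hd_odd, ZMod.χ₄_nat_three_mod_four (by omega)]
  have h_mod : 2 * (p : ℤ) ≡ -1 [ZMOD d] := by
    rw [Int.modEq_comm, Int.modEq_iff_dvd, sub_neg_eq_add]
    exact_mod_cast h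
  have h_two_mul : J(2 * p | d) = -1 := (jacobiSym.mod_left' h_mod).trans h_neg_one
  rw [jacobiSym.mul_left, h_two] at h_two_mul
  linarith

theorem exists_two_mul_dvd_sq_add {p : ℕ} {a : ℤ} (hp : Odd p) (ha : Odd a)
    (h : IsSquare (-a : ZMod p)) : ∃ r : ℤ, 2 * (p : ℤ) ∣ r ^ 2 + a := by
  obtain ⟨y, hy⟩ := h
  obtain ⟨r, rfl⟩ := ZMod.intCast_surjective y
  have h_dvd : (p : ℤ) ∣ r ^ 2 + a := by
    rw [← ZMod.intCast_zmod_eq_zero_iff_dvd]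
    push_cast
    linear_combination -hy
  have h_coprime : IsCoprime (2 : ℤ) p := by
    exact_mod_cast Nat.isCoprime_iff_coprime.2 hp.coprime_two_left
  rcases Int.even_or_odd r with hr | hr
  · refine ⟨r + p, h_coprime.mul_dvd ?_ ?_⟩
    · have : Odd (r + p) := hr.add_odd (by exact_mod_cast hp)
      exact (this.pow.add_odd ha).two_dvd
    · have : (r + p) ^ 2 + a = r ^ 2 + a + p * (2 * r + p) := by ring
      exact this ▸ dvd_add h_dvd (dvd_mul_right _ _)
  · exact ⟨r, h_coprime.mul_dvd (hr.pow.add_odd ha).two_dvd h_dvd⟩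

-- In `n = 4 * k + 1`, the primes `p ≡ 6 * k + 1 [MOD 4 * n]` are those with `2 * p + 1` of the form
-- `(8 * j + 3) * n`.
theorem exists_prime_mul_eq_two_mul_add_one {n : ℕ} (hn : n % 4 = 1) :
    ∃ d p : ℕ, p.Prime ∧ Odd p ∧ d % 8 = 3 ∧ d * n = 2 * p + 1 := by
  obtain ⟨k, rfl⟩ : ∃ k, n = 4 * k + 1 := ⟨n / 4, by omega⟩
  have h_coprime : IsCoprime ((6 * k + 1 : ℕ) : ℤ) (4 * (4 * k + 1) : ℕ) := by
    push_cast
    have h_two : IsCoprime (6 * k + 1 : ℤ) 2 := ⟨1, -(3 * k), by ring⟩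
    have h_four : IsCoprime (6 * k + 1 : ℤ) 4 := by simpa using h_two.pow_right (n := 2)
    exact h_four.mul_right ⟨-2, 3, by ring⟩
  obtain ⟨p, hp_gt, hp, hp_mod⟩ :=
    Nat.forall_exists_prime_gt_and_modEq (6 * k + 1) (by omega)
      (Nat.isCoprime_iff_coprime.1 h_coprime)
  obtain ⟨j, hj⟩ := (Nat.modEq_iff_dvd' hp_gt.le).1 hp_mod.symm
  obtain rfl : p = 6 * k + 1 + 4 * (4 * k + 1) * j := by omega
  exact ⟨8 * j + 3, _, hp, ⟨3 * k + 2 * (4 * k + 1) * j, by ring⟩, by omega, by ring⟩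

theorem exists_eq_sum_three_sq_of_dvd {n d p : ℕ} {r : ℤ} (hd : 0 < d)
    (h : d * n = 2 * p + 1) (hr : 2 * (p : ℤ) ∣ r ^ 2 + d) :
    ∃ u v w : ℤ, (n : ℤ) = u ^ 2 + v ^ 2 + w ^ 2 := by
  obtain ⟨s, hs⟩ := hr
  have hd' : 0 < (d : ℤ) := by exact_mod_cast hd
  have h' : (d * n : ℤ) = 2 * p + 1 := by exact_mod_cast h
  have hs_pos : 0 < s := by
    have : 0 < 2 * (p : ℤ) * s := by rw [← hs]; positivity
    exact pos_of_mul_pos_right this (by positivity)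
  let A : Matrix (Fin 3) (Fin 3) ℤ := !![s, r, 1; r, 2 * p, 0; 1, 0, n]
  have hA_herm : A.IsHermitian := by
    ext i j
    fin_cases i <;> fin_cases j <;> rfl
  have hA_adj : A.adjugate 2 2 = d := by
    simp only [A, adjugate_fin_three, of_apply, cons_val', cons_val_fin_one, cons_val]
    linear_combination -hs
  have hA_det : A.det = 1 := by
    simp only [A, det_fin_three, of_apply, cons_val', cons_val_fin_one, cons_val]
    linear_combination h' - n * hs
  have hA : A.PosDef :=
    posDef_fin_three_of_minors_pos hA_herm hs_pos (hA_adj ▸ hd') (hA_det ▸ one_pos)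
  obtain ⟨x, hx⟩ := (isUnimodularGram_of_posDef hA hA_det).exists_diag_eq_sum_sq 2
  exact ⟨x 0, x 1, x 2, hx.trans (Fin.sum_univ_three _)⟩

theorem exists_eq_sum_three_sq_of_mod_four_eq_one {n : ℕ} (hn : n % 4 = 1) :
    ∃ u v w : ℤ, (n : ℤ) = u ^ 2 + v ^ 2 + w ^ 2 := by
  obtain ⟨d, p, hp, hp_odd, hd, h⟩ := exists_prime_mul_eq_two_mul_add_one hn
  have : Fact p.Prime := ⟨hp⟩
  have hJ : J(-d | p) = 1 := by
    rw [jacobiSym_neg_eq_of_mod_four_eq_three (by omega) hp_odd]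
    exact jacobiSym_eq_one_of_dvd_two_mul_add_one hd ⟨n, h.symm⟩
  have h_sq : IsSquare (-(d : ℤ) : ZMod p) := by
    exact_mod_cast ZMod.isSquare_of_jacobiSym_eq_one hJ
  have hd_odd : Odd (d : ℤ) := by
    exact_mod_cast Nat.odd_iff.2 (by omega)
  obtain ⟨r, hr⟩ := exists_two_mul_dvd_sq_add hp_odd hd_odd h_sq
  exact exists_eq_sum_three_sq_of_dvd (by omega) h hr

theorem exists_eq_odd_sq_add_even_sq_add_even_sq {n : ℕ} (hn : n % 4 = 1) :
    ∃ x y z : ℤ, (n : ℤ) = (2 * x + 1) ^ 2 + (2 * y) ^ 2 + (2 * z) ^ 2 := by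
  obtain ⟨u, v, w, h⟩ := exists_eq_sum_three_sq_of_mod_four_eq_one hn
  rcases Int.even_or_odd' u with ⟨x, rfl | rfl⟩ <;>
  rcases Int.even_or_odd' v with ⟨y, rfl | rfl⟩ <;>
  rcases Int.even_or_odd' w with ⟨z, rfl | rfl⟩
  case inl.inl.inr => exact ⟨z, x, y, by rw [h]; ring⟩
  case inl.inr.inl => exact ⟨y, x, z, by rw [h]; ring⟩
  case inr.inl.inl => exact ⟨x, y, z, h⟩
  all_goals
    ring_nf at h
    omega

end SumThreeSquares

section Hermitian

theorem exists_two_mul_norm_add_mul_le (w : GaussianInt) {a : ℤ} (ha : 0 < a) :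
    ∃ s : GaussianInt, 2 * (w + s * a).norm ≤ a ^ 2 := by
  obtain ⟨k, hk⟩ := exists_two_mul_abs_add_mul_le w.re ha
  obtain ⟨l, hl⟩ := exists_two_mul_abs_add_mul_le w.im ha
  refine ⟨⟨k, l⟩, ?_⟩
  simp only [Zsqrtd.norm_def, Zsqrtd.re_add, Zsqrtd.im_add, Zsqrtd.re_mul, Zsqrtd.im_mul,
    Zsqrtd.re_intCast, Zsqrtd.im_intCast]
  linarith [four_mul_sq_le_sq_of_two_mul_abs_le hk, four_mul_sq_le_sq_of_two_mul_abs_le hl]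

theorem norm_star_add_mul_intCast (w s : GaussianInt) (p : ℤ) :
    (star w + s * p).norm = w.norm + p * (s.norm * p + 2 * (s * w).re) := by
  simp only [Zsqrtd.norm_def, Zsqrtd.re_add, Zsqrtd.im_add, Zsqrtd.re_mul, Zsqrtd.im_mul,
    Zsqrtd.re_star, Zsqrtd.im_star, Zsqrtd.re_intCast, Zsqrtd.im_intCast]
  ring

theorem isUnimodularGram_one_left (w : GaussianInt) :
    IsUnimodularGram !![1, w; star w, ((1 + w.norm : ℤ) : GaussianInt)] := by
  refine ⟨⟨!![1, 0; star w, 1], by simp⟩, Matrix.ext fun i j ↦ ?_⟩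
  fin_cases i <;> fin_cases j <;> simp [mul_apply, Zsqrtd.norm_eq_mul_conj, mul_comm, add_comm]

-- The base change by `!![s, 1; -1, 0]` translates `star w` by `s * p` and exchanges the diagonal.
theorem IsUnimodularGram.of_translate {p q : ℤ} {w : GaussianInt} (s : GaussianInt)
    (h : IsUnimodularGram !![((s.norm * p + 2 * (s * w).re + q : ℤ) : GaussianInt),
      -(star w + s * p); star (-(star w + s * p)), p]) :
    IsUnimodularGram !![(p : GaussianInt), w; star w, q] := by
  let g : SL(2, GaussianInt) := ⟨!![s, 1; -1, 0], by simp⟩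
  have hg : g.1 = !![s, 1; -1, 0] := rfl
  refine .of_baseChange g ?_
  convert h using 1
  ext i j <;> fin_cases i <;> fin_cases j <;>
    simp [baseChange_apply, hg, Fin.sum_univ_two, Zsqrtd.norm_def] <;> ring

theorem isUnimodularGram_of_mul_eq_one_add_norm {p q : ℤ} {w : GaussianInt} (hp : 0 < p)
    (h : p * q = 1 + w.norm) : IsUnimodularGram !![(p : GaussianInt), w; star w, q] := by
  induction hN : p.toNat using Nat.strong_induction_on generalizing p q w with | _ N ih
  obtain rfl | hp2 : p = 1 ∨ 2 ≤ p := by omega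
  · obtain rfl : q = 1 + w.norm := by linarith
    exact_mod_cast isUnimodularGram_one_left w
  obtain ⟨s, hs⟩ := exists_two_mul_norm_add_mul_le (star w) hp
  set w' := star w + s * p
  set q' := s.norm * p + 2 * (s * w).re + q with hq'
  have h' : q' * p = 1 + (-w').norm := by
    rw [Zsqrtd.norm_neg, norm_star_add_mul_intCast, hq']
    linear_combination h
  have h_norm_nonneg : 0 ≤ (-w').norm := GaussianInt.norm_nonneg _
  have hq'_pos : 0 < q' := pos_of_mul_pos_left (by rw [h']; positivity) hp.le
  have hq'_lt : q' < p := by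
    rw [Zsqrtd.norm_neg] at h'
    nlinarith
  exact .of_translate s (ih q'.toNat (by omega) hq'_pos h' rfl)

theorem trace_mul_conjTranspose_eq_sum_norm {d : ℤ} {m n : Type*} [Fintype m] [Fintype n]
    (M : Matrix m n (ℤ√d)) :
    (M * Mᴴ).trace = ((∑ i, ∑ j, (M i j).norm : ℤ) : ℤ√d) := by
  simp [trace, mul_apply, Zsqrtd.norm_eq_mul_conj]

theorem exists_sum_norm_eq_add {p q : ℤ} {w : GaussianInt} (hp : 0 < p)
    (h : p * q = 1 + w.norm) :
    ∃ γ : SL(2, GaussianInt), ∑ i, ∑ j, (γ.1 i j).norm = p + q := by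
  obtain ⟨γ, hγ⟩ := isUnimodularGram_of_mul_eq_one_add_norm hp h
  have h_trace := trace_mul_conjTranspose_eq_sum_norm γ.1
  rw [hγ, trace_fin_two_of] at h_trace
  exact ⟨γ, by exact_mod_cast h_trace.symm⟩

end Hermitian

/-- For every odd integer `n ≥ 3` there exists `γ ∈ SL(2, ℤ[i])` with
`‖γ‖² = |a|² + |b|² + |c|² + |d|² = n`, where `|z|² = z.re² + z.im²` is the
squared complex absolute value of the Gaussian integer `z` (i.e. `Zsqrtd.norm`). -/
theorem sl2_gaussian_norm_sq_eq_odd (n : ℤ) (hodd : Odd n) (hn : 3 ≤ n) :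
    ∃ γ : Matrix.SpecialLinearGroup (Fin 2) GaussianInt,
      Zsqrtd.norm (γ.1 0 0) + Zsqrtd.norm (γ.1 0 1) +
        Zsqrtd.norm (γ.1 1 0) + Zsqrtd.norm (γ.1 1 1) = n := by
  obtain ⟨k, rfl⟩ := hodd
  obtain ⟨N, hN⟩ : ∃ N : ℕ, (N : ℤ) = (2 * k + 1) ^ 2 - 4 :=
    ⟨_, Int.toNat_of_nonneg (by nlinarith)⟩
  have hN_mod : N % 4 = 1 := by
    ring_nf at hN
    omega
  obtain ⟨x, y, z, h⟩ := exists_eq_odd_sq_add_even_sq_add_even_sq hN_mod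
  have h_det : (k + x + 1) * (k - x) = 1 + (⟨y, z⟩ : GaussianInt).norm := by
    rw [Zsqrtd.norm_def]
    linarith
  have h_pos : 0 < k + x + 1 := by
    have := GaussianInt.norm_nonneg ⟨y, z⟩
    nlinarith
  obtain ⟨γ, hγ⟩ := exists_sum_norm_eq_add h_pos h_det
  refine ⟨γ, ?_⟩
  simp only [Fin.sum_univ_two] at hγ
  linarith
end

section
/- For every prime number p there exists a matrix γ in SL(2, ℤ[i]) whose norm squared equals p, i.e. ‖γ‖² = p. (For p = 2 one may take γ to be the identity matrix; all odd primes are covered by the representation of all odd n ≥ 3.) -/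
open Matrix

/-!
If `H` is a positive definite Hermitian matrix over `ℤ[i]` with diagonal `a, b` and determinant
`1`, then Gauss reduction gives `H = γ γᴴ` with `γ ∈ SL(2, ℤ[i])`, and taking traces `‖γ‖² = a + b`.
So `n` is a value of `‖γ‖²` as soon as `n = a + b` with `ab - 1` a sum of two squares `u² + v²`,
that is, `n² - 4 = (a - b)² + (2u)² + (2v)²`. For odd `n` we have `n² - 4 ≡ 5 (mod 8)`, so `n² - 4`
is a sum of three squares, exactly one of which is odd.

That every `m ≡ 5 (mod 8)` is a sum of three squares is Dirichlet's argument: `m` is a diagonal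
entry of a positive definite ternary form of determinant `1`, and Hermite's reduction makes such a
form congruent to the identity. The form comes from a prime `p` with `2p = Dm - 1` and `-D` a square
modulo `p`.
-/

section StarCongruence

variable {n R : Type*} [Fintype n] [DecidableEq n] [CommRing R] [StarRing R]
  {P Q S : Matrix n n R}

/-- Equivalence of the sesquilinear forms with Gram matrices `P` and `Q` under a change of basis
of determinant `1`. -/
def StarCongruent (P Q : Matrix n n R) : Prop :=
  ∃ γ : SpecialLinearGroup n R, γ.1 * P * γ.1ᴴ = Q

theorem StarCongruent.refl (P : Matrix n n R) : StarCongruent P P :=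
  ⟨1, by simp⟩

theorem StarCongruent.symm (h : StarCongruent P Q) : StarCongruent Q P := by
  obtain ⟨γ, rfl⟩ := h
  have hinv : γ⁻¹.1 * γ.1 = 1 := congrArg Subtype.val (inv_mul_cancel γ)
  refine ⟨γ⁻¹, ?_⟩
  calc γ⁻¹.1 * (γ.1 * P * γ.1ᴴ) * γ⁻¹.1ᴴ
      = (γ⁻¹.1 * γ.1) * P * (γ⁻¹.1 * γ.1)ᴴ := by simp only [conjTranspose_mul, Matrix.mul_assoc]
    _ = P := by rw [hinv, conjTranspose_one, Matrix.one_mul, Matrix.mul_one]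

theorem StarCongruent.trans (hPQ : StarCongruent P Q) (hQS : StarCongruent Q S) :
    StarCongruent P S := by
  obtain ⟨γ, rfl⟩ := hPQ
  obtain ⟨δ, rfl⟩ := hQS
  exact ⟨δ * γ, by simp [Matrix.mul_assoc]⟩

theorem StarCongruent.det_eq (h : StarCongruent P Q) : P.det = Q.det := by
  obtain ⟨γ, rfl⟩ := h
  simp [det_conjTranspose]

end StarCongruence

section BinaryForms

variable {R : Type*} [CommRing R] [StarRing R]

/-- The Gram matrix of the binary Hermitian form `a |u|² + 2 Re(x u v̄) + b |v|²`. -/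
def binaryForm (a : ℤ) (x : R) (b : ℤ) : Matrix (Fin 2) (Fin 2) R :=
  !![(a : R), x; star x, (b : R)]

/-- An integer-valued norm `x ↦ x * star x` under which every element has a residue modulo each
integer `a > 0` of norm at most `(k / 4) a²`. The rings `ℤ` and `ℤ[i]` have one, with `k = 1` and
`k = 2`. -/
structure HermiteNorm (R : Type*) [CommRing R] [StarRing R] (k : ℤ) where
  norm : R → ℤ
  norm_nonneg (x : R) : 0 ≤ norm x
  cast_norm (x : R) : (norm x : R) = x * star x
  exists_norm_add_le {a : ℤ} (ha : 0 < a) (x : R) : ∃ t : R, 4 * norm (x + a * t) ≤ k * a ^ 2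

theorem exists_four_mul_sq_add_le {a : ℤ} (ha : 0 < a) (x : ℤ) :
    ∃ t : ℤ, 4 * (x + a * t) ^ 2 ≤ a ^ 2 := by
  have hdiv := Int.emod_add_mul_ediv (2 * x + a) (2 * a)
  have hnonneg := Int.emod_nonneg (2 * x + a) (b := 2 * a) (by lia)
  have hlt := Int.emod_lt_of_pos (2 * x + a) (b := 2 * a) (by lia)
  refine ⟨-((2 * x + a) / (2 * a)), ?_⟩
  rw [show (4 : ℤ) = 2 ^ 2 by rfl, ← mul_pow]
  apply sq_le_sq' <;> linarith

/-- The square on `ℤ`, as the norm of the trivial star ring. -/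
@[simps]
def intHermiteNorm : HermiteNorm ℤ 1 where
  norm x := x ^ 2
  norm_nonneg := sq_nonneg
  cast_norm x := by simp [sq]
  exists_norm_add_le ha x := by simpa using exists_four_mul_sq_add_le ha x

/-- The norm on `ℤ[i]`, real and imaginary parts being reduced separately. -/
@[simps]
def gaussianHermiteNorm : HermiteNorm GaussianInt 2 where
  norm := Zsqrtd.norm
  norm_nonneg := GaussianInt.norm_nonneg
  cast_norm := Zsqrtd.norm_eq_mul_conj
  exists_norm_add_le {a} ha x := by
    obtain ⟨s, hs⟩ := exists_four_mul_sq_add_le ha x.re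
    obtain ⟨t, ht⟩ := exists_four_mul_sq_add_le ha x.im
    refine ⟨⟨s, t⟩, ?_⟩
    simp only [Zsqrtd.smul_val, Zsqrtd.norm_def, Zsqrtd.re_add, Zsqrtd.im_add]
    linarith

theorem binaryForm_starCongruent_swap (a b : ℤ) (x : R) :
    StarCongruent (binaryForm a x b) (binaryForm b (-star x) a) :=
  ⟨⟨!![0, 1; -1, 0], by simp⟩, by
    ext i j
    fin_cases i <;> fin_cases j <;> simp [binaryForm, mul_apply, Fin.sum_univ_two]⟩

namespace HermiteNorm

variable {k : ℤ} (N : HermiteNorm R k)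
include N

theorem exists_starCongruent_add (a b : ℤ) (x t : R) :
    ∃ b', StarCongruent (binaryForm a x b) (binaryForm a (x + a * t) b') := by
  refine ⟨b + (N.norm (x + t) - N.norm x - N.norm t) + a * N.norm t,
    ⟨!![1, 0; star t, 1], by simp⟩, ?_⟩
  ext i j
  fin_cases i <;> fin_cases j <;>
    simp [binaryForm, mul_apply, Fin.sum_univ_two, N.cast_norm] <;> ring

theorem disc_eq [CharZero R] {a a' b b' : ℤ} {x x' : R}
    (h : StarCongruent (binaryForm a x b) (binaryForm a' x' b')) :
    a * b - N.norm x = a' * b' - N.norm x' := by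
  have hdet := h.det_eq
  simp only [binaryForm, det_fin_two_of, ← N.cast_norm] at hdet
  exact_mod_cast hdet

theorem exists_starCongruent_reduced [CharZero R] {a b : ℤ} {x : R} (ha : 0 < a)
    (hdisc : 0 < a * b - N.norm x) :
    ∃ a' x' b', StarCongruent (binaryForm a x b) (binaryForm a' x' b') ∧ 0 < a' ∧
      (4 - k) * a' ^ 2 ≤ 4 * (a * b - N.norm x) := by
  induction hm : a.toNat using Nat.strong_induction_on generalizing a b x with
  | _ m ih =>
  by_cases hred : (4 - k) * a ^ 2 ≤ 4 * (a * b - N.norm x)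
  · exact ⟨a, x, b, .refl _, ha, hred⟩
  obtain ⟨t, ht⟩ := N.exists_norm_add_le ha x
  obtain ⟨b', hshear⟩ := N.exists_starCongruent_add a b x t
  have hswap := hshear.trans (binaryForm_starCongruent_swap a b' (x + a * t))
  have hdisc_shear := N.disc_eq hshear
  have hpos : 0 < b' :=
    pos_of_mul_pos_right (a := a) (by linarith [N.norm_nonneg (x + a * t)]) ha.le
  have hlt : b' < a := by
    have : a * b' < a * a := by linarith
    exact lt_of_mul_lt_mul_left this ha.le
  rw [N.disc_eq hswap] at hdisc ⊢
  obtain ⟨a', x', b'', h, hbound⟩ := ih b'.toNat (by lia) hpos hdisc rfl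
  exact ⟨a', x', b'', hswap.trans h, hbound⟩

end HermiteNorm
end BinaryForms

section GaussianForms

theorem one_starCongruent_binaryForm_gaussianInt {a b : ℤ} {x : GaussianInt} (ha : 0 < a)
    (hdisc : a * b - x.norm = 1) : StarCongruent 1 (binaryForm a x b) := by
  obtain ⟨a', x', b', h, ha', hbound⟩ :=
    gaussianHermiteNorm.exists_starCongruent_reduced ha (x := x) (b := b) (by simp [hdisc])
  have hdisc' : a' * b' - x'.norm = 1 := (gaussianHermiteNorm.disc_eq h).symm.trans hdisc
  have hone : a' = 1 := by
    rw [gaussianHermiteNorm_norm, hdisc] at hbound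
    nlinarith
  subst hone
  refine .trans ⟨⟨!![1, 0; star x', 1], by simp⟩, ?_⟩ h.symm
  obtain rfl : b' = 1 + x'.norm := by linarith
  ext i j : 1
  fin_cases i <;> fin_cases j <;>
    simp [binaryForm, mul_apply, Fin.sum_univ_two, Zsqrtd.norm_eq_mul_conj]
  ring

/-- `‖M‖²`, the sum of the squared absolute values of the entries. -/
def gaussianNormSq (M : Matrix (Fin 2) (Fin 2) GaussianInt) : ℤ :=
  (M 0 0).norm + (M 0 1).norm + (M 1 0).norm + (M 1 1).norm

theorem cast_gaussianNormSq (M : Matrix (Fin 2) (Fin 2) GaussianInt) :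
    (gaussianNormSq M : GaussianInt) = (M * Mᴴ).trace := by
  simp only [gaussianNormSq, Int.cast_add, Zsqrtd.norm_eq_mul_conj, trace_fin_two, mul_apply,
    conjTranspose_apply, Fin.sum_univ_two]
  ring

theorem exists_gaussianNormSq_eq_add {a b : ℤ} {x : GaussianInt} (ha : 0 < a)
    (hdisc : a * b - x.norm = 1) :
    ∃ γ : SpecialLinearGroup (Fin 2) GaussianInt, gaussianNormSq γ.1 = a + b := by
  obtain ⟨γ, hγ⟩ := one_starCongruent_binaryForm_gaussianInt ha hdisc
  refine ⟨γ, ?_⟩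
  rw [Matrix.mul_one] at hγ
  have htrace := cast_gaussianNormSq γ.1
  rw [hγ, binaryForm, trace_fin_two_of] at htrace
  exact_mod_cast htrace

theorem exists_gaussianNormSq_eq_of_sq_add {n k u v : ℤ} (hn : 0 < n) (hparity : Even (n + k))
    (h : k ^ 2 + (2 * u) ^ 2 + (2 * v) ^ 2 = n ^ 2 - 4) :
    ∃ γ : SpecialLinearGroup (Fin 2) GaussianInt, gaussianNormSq γ.1 = n := by
  obtain ⟨a, ha⟩ := hparity
  obtain rfl : k = 2 * a - n := by linarith
  have hdisc : a * (n - a) - (⟨u, v⟩ : GaussianInt).norm = 1 := by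
    rw [Zsqrtd.norm_def]
    linarith
  have hpos : 0 < a := by nlinarith [sq_nonneg u, sq_nonneg v]
  simpa using exists_gaussianNormSq_eq_add hpos hdisc

end GaussianForms

section TernaryForms

variable {a b c d e f : ℤ}

/-- The Gram matrix of the ternary quadratic form
`a x² + b y² + c z² + 2 d x y + 2 e x z + 2 f y z`. -/
def ternaryForm (a b c d e f : ℤ) : Matrix (Fin 3) (Fin 3) ℤ :=
  !![a, d, e; d, b, f; e, f, c]

theorem mul_det_ternaryForm (a b c d e f : ℤ) :
    a * (ternaryForm a b c d e f).det =
      (a * b - d ^ 2) * (a * c - e ^ 2) - (a * f - d * e) ^ 2 := by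
  simp only [ternaryForm, det_fin_three, of_apply, cons_val', cons_val_zero, cons_val_one, cons_val,
    cons_val_fin_one]
  ring

theorem StarCongruent.exists_int_coeffs {a' d' b' : ℤ}
    (h : StarCongruent (binaryForm a d b) (binaryForm a' d' b')) :
    ∃ p q r s : ℤ, p * s - q * r = 1 ∧ p ^ 2 * a + 2 * p * q * d + q ^ 2 * b = a' ∧
      p * r * a + (p * s + q * r) * d + q * s * b = d' ∧
      r ^ 2 * a + 2 * r * s * d + s ^ 2 * b = b' := by
  obtain ⟨γ, hγ⟩ := h
  simp only [← Matrix.ext_iff, Fin.forall_fin_two, binaryForm, mul_apply, Fin.sum_univ_two,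
    conjTranspose_apply, star_trivial, Int.cast_eq, of_apply, cons_val', cons_val_zero,
    cons_val_one, cons_val_fin_one] at hγ
  obtain ⟨⟨ha', hd'⟩, -, hb'⟩ := hγ
  refine ⟨γ.1 0 0, γ.1 0 1, γ.1 1 0, γ.1 1 1, (det_fin_two γ.1).symm.trans γ.2, ?_, ?_, ?_⟩
  · linear_combination ha'
  · linear_combination hd'
  · linear_combination hb'

theorem exists_ternaryForm_starCongruent_of_head {a' d' b' : ℤ}
    (h : StarCongruent (binaryForm a d b) (binaryForm a' d' b')) (c e f : ℤ) :
    ∃ e' f', StarCongruent (ternaryForm a b c d e f) (ternaryForm a' b' c d' e' f') := by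
  obtain ⟨p, q, r, s, hdet, rfl, rfl, rfl⟩ := h.exists_int_coeffs
  refine ⟨p * e + q * f, r * e + s * f, ⟨!![p, q, 0; r, s, 0; 0, 0, 1], ?_⟩, ?_⟩
  · simpa [det_fin_three] using hdet
  · ext i j
    fin_cases i <;> fin_cases j <;> simp [ternaryForm, mul_apply, Fin.sum_univ_three] <;> ring

/- Up to the factor `a`, the binary form below is the ternary one projected orthogonally to the
first basis vector, so a change of basis of the last two vectors acts on it like on any binary
form. -/
theorem exists_ternaryForm_starCongruent_of_adjoint {E F G : ℤ}
    (h : StarCongruent (binaryForm (a * b - d ^ 2) (a * f - d * e) (a * c - e ^ 2))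
      (binaryForm E F G)) :
    ∃ b' c' d' e' f', StarCongruent (ternaryForm a b c d e f) (ternaryForm a b' c' d' e' f') ∧
      a * b' - d' ^ 2 = E := by
  obtain ⟨p, q, r, s, hdet, rfl, -, -⟩ := h.exists_int_coeffs
  refine ⟨p ^ 2 * b + 2 * p * q * f + q ^ 2 * c, r ^ 2 * b + 2 * r * s * f + s ^ 2 * c,
    p * d + q * e, r * d + s * e, p * r * b + (p * s + q * r) * f + q * s * c,
    ⟨⟨!![1, 0, 0; 0, p, q; 0, r, s], ?_⟩, ?_⟩, ?_⟩
  · simpa [det_fin_three] using hdet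
  · ext i j
    fin_cases i <;> fin_cases j <;> simp [ternaryForm, mul_apply, Fin.sum_univ_three] <;> ring
  · ring

theorem exists_ternaryForm_starCongruent_adjoint_reduced (ha : 0 < a) (hE : 0 < a * b - d ^ 2)
    (hdet : (ternaryForm a b c d e f).det = 1) :
    ∃ b' c' d' e' f', StarCongruent (ternaryForm a b c d e f) (ternaryForm a b' c' d' e' f') ∧
      0 < a * b' - d' ^ 2 ∧ 3 * (a * b' - d' ^ 2) ^ 2 ≤ 4 * a := by
  have hdisc := mul_det_ternaryForm a b c d e f
  rw [hdet] at hdisc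
  obtain ⟨E, F, G, h, hE', hbound⟩ := intHermiteNorm.exists_starCongruent_reduced
    (x := a * f - d * e) (b := a * c - e ^ 2) hE (by rw [intHermiteNorm_norm]; linarith)
  obtain ⟨b', c', d', e', f', h', rfl⟩ := exists_ternaryForm_starCongruent_of_adjoint h
  refine ⟨b', c', d', e', f', h', hE', ?_⟩
  rw [intHermiteNorm_norm, ← hdisc] at hbound
  linarith

theorem one_starCongruent_ternaryForm_of_one (hE : b - d ^ 2 = 1)
    (hdet : (ternaryForm 1 b c d e f).det = 1) : StarCongruent 1 (ternaryForm 1 b c d e f) := by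
  have hdisc := mul_det_ternaryForm 1 b c d e f
  obtain rfl : b = d ^ 2 + 1 := by linarith
  obtain rfl : c = e ^ 2 + (f - d * e) ^ 2 + 1 := by
    rw [hdet] at hdisc
    linear_combination -hdisc
  refine ⟨⟨!![1, 0, 0; d, 1, 0; e, f - d * e, 1], by simp [det_fin_three]⟩, ?_⟩
  ext i j
  fin_cases i <;> fin_cases j <;> simp [ternaryForm, mul_apply, Fin.sum_univ_three] <;> ring

theorem lt_of_three_mul_sq_le {a a' E : ℤ} (ha : 1 < a) (hE : 3 * E ^ 2 ≤ 4 * a)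
    (ha' : 3 * a' ^ 2 ≤ 4 * E) : a' < a := by
  by_contra! hle
  have hsq : 3 * a ^ 2 ≤ 4 * E := by nlinarith
  have hfourth : (3 * a ^ 2) ^ 2 ≤ (4 * E) ^ 2 := pow_le_pow_left₀ (by positivity) hsq 2
  have hcube : 27 * a ^ 3 ≤ 64 := le_of_mul_le_mul_right (a := a) (by linarith) (by linarith)
  have : (2 : ℤ) ^ 3 ≤ a ^ 3 := pow_le_pow_left₀ (by simp) (by lia) 3
  linarith

theorem one_starCongruent_ternaryForm (ha : 0 < a) (hE : 0 < a * b - d ^ 2)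
    (hdet : (ternaryForm a b c d e f).det = 1) : StarCongruent 1 (ternaryForm a b c d e f) := by
  induction hm : a.toNat using Nat.strong_induction_on generalizing a b c d e f with
  | _ m ih =>
  obtain ⟨b', c', d', e', f', h, hE', hbound⟩ :=
    exists_ternaryForm_starCongruent_adjoint_reduced ha hE hdet
  have hdet' := h.det_eq.symm.trans hdet
  refine .trans ?_ h.symm
  rcases eq_or_ne a 1 with rfl | hne
  · exact one_starCongruent_ternaryForm_of_one (by nlinarith) hdet'
  obtain ⟨a'', d'', b'', h', ha'', hbound'⟩ :=
    intHermiteNorm.exists_starCongruent_reduced ha (x := d') (b := b') hE'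
  obtain ⟨e'', f'', h''⟩ := exists_ternaryForm_starCongruent_of_head h' c' e' f'
  have hlt : a'' < a :=
    lt_of_three_mul_sq_le (by lia) hbound (by simpa using hbound')
  have hdisc : a * b' - d' ^ 2 = a'' * b'' - d'' ^ 2 := intHermiteNorm.disc_eq h'
  exact (ih a''.toNat (by lia) ha'' (hdisc ▸ hE') (h''.det_eq.symm.trans hdet') rfl).trans h''.symm

theorem exists_sq_add_sq_add_sq_eq (ha : 0 < a) (hE : 0 < a * b - d ^ 2)
    (hdet : (ternaryForm a b c d e f).det = 1) : ∃ x y z : ℤ, x ^ 2 + y ^ 2 + z ^ 2 = c := by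
  obtain ⟨γ, hγ⟩ := one_starCongruent_ternaryForm ha hE hdet
  refine ⟨γ.1 2 0, γ.1 2 1, γ.1 2 2, ?_⟩
  have hentry := congrFun₂ hγ 2 2
  simpa [ternaryForm, mul_apply, Fin.sum_univ_three, sq] using hentry

end TernaryForms

section SumsOfThreeSquares

theorem exists_prime_two_mul_add_one_eq {m : ℕ} (hm : m % 8 = 5) :
    ∃ p v : ℕ, p.Prime ∧ 2 * p + 1 = (8 * v + 3) * m := by
  -- A prime `p ≡ r` modulo `4 * m` satisfies `2 * p + 1 ≡ 3 * m` modulo `8 * m`.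
  obtain ⟨r, hr⟩ : ∃ r, 2 * r + 1 = 3 * m := ⟨(3 * m - 1) / 2, by lia⟩
  have hcop : r.Coprime (4 * m) := by
    have hm' : r.Coprime m := by
      rw [← Nat.isCoprime_iff_coprime]
      exact ⟨-2, 3, by lia⟩
    have h2 : r.Coprime (2 ^ 2) := (Nat.coprime_two_right.2 ⟨r / 2, by lia⟩).pow_right 2
    exact h2.mul_right hm'
  obtain ⟨p, hlt, hp, hmod⟩ := Nat.forall_exists_prime_gt_and_modEq r (q := 4 * m) (by lia) hcop
  obtain ⟨v, hv⟩ := (Nat.modEq_iff_dvd' hlt.le).1 hmod.symm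
  refine ⟨p, v, hp, ?_⟩
  have : p = r + 4 * m * v := by lia
  subst this
  linarith

theorem jacobiSym_neg_eq_one_of_dvd {D p : ℕ} (hD : D % 8 = 3) (hp : p % 4 = 3)
    (hdvd : D ∣ 2 * p + 1) : jacobiSym (-D) p = 1 := by
  have hDodd : Odd D := Nat.odd_iff.2 (by lia)
  have hneg_two : jacobiSym (-2) D = 1 := by
    rw [jacobiSym.at_neg_two hDodd, ZMod.χ₈'_nat_eq_if_mod_eight]
    simp [hD, show D % 2 = 1 by lia]
  have hneg_two_mul : jacobiSym (-2 * p) D = 1 := by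
    rw [← jacobiSym.one_left D]
    refine jacobiSym.mod_left' (Int.modEq_iff_dvd.2 ?_)
    rw [show 1 - -2 * (p : ℤ) = (2 * p + 1 : ℕ) by lia]
    exact Int.natCast_dvd_natCast.2 hdvd
  rw [jacobiSym.mul_left, hneg_two, one_mul] at hneg_two_mul
  calc jacobiSym (-D) p = jacobiSym (-1) p * jacobiSym D p := by
        rw [← jacobiSym.mul_left, neg_one_mul]
    _ = -1 * -jacobiSym p D := by
        rw [jacobiSym.at_neg_one (Nat.odd_iff.2 (by lia)), ZMod.χ₄_nat_three_mod_four hp,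
          jacobiSym.quadratic_reciprocity_three_mod_four (by lia) hp]
    _ = 1 := by rw [hneg_two_mul]; norm_num

theorem exists_two_mul_dvd_add_sq {D : ℤ} {p : ℕ} [Fact p.Prime] (hD : Odd D) (hp : Odd p)
    (h : jacobiSym (-D) p = 1) : ∃ d : ℤ, 2 * (p : ℤ) ∣ D + d ^ 2 := by
  obtain ⟨y, hy⟩ := ZMod.isSquare_of_jacobiSym_eq_one h
  obtain ⟨y, rfl⟩ := ZMod.intCast_surjective y
  have hdvd : (p : ℤ) ∣ D + y ^ 2 := by
    rw [← ZMod.intCast_zmod_eq_zero_iff_dvd]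
    push_cast at hy ⊢
    linear_combination -hy
  have hcop : IsCoprime (2 : ℤ) p := by
    exact_mod_cast Nat.isCoprime_iff_coprime.2 (Nat.coprime_two_left.2 hp)
  have hp' : Odd (p : ℤ) := by exact_mod_cast hp
  rcases Int.even_or_odd y with hy | hy
  · refine ⟨y + p, hcop.mul_dvd (hD.add_odd (hy.add_odd hp').pow).two_dvd ?_⟩
    rw [show D + (y + p) ^ 2 = D + y ^ 2 + p * (2 * y + p) by ring]
    exact hdvd.add (dvd_mul_right _ _)
  · exact ⟨y, hcop.mul_dvd (hD.add_odd hy.pow).two_dvd hdvd⟩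

theorem exists_sum_three_sq_of_dvd_add_sq {D m d : ℤ} (hD : 0 < D) (hm : 1 < D * m)
    (hdvd : D * m - 1 ∣ D + d ^ 2) : ∃ x y z : ℤ, x ^ 2 + y ^ 2 + z ^ 2 = m := by
  obtain ⟨a, ha⟩ := hdvd
  have hapos : 0 < a :=
    pos_of_mul_pos_right (a := D * m - 1) (ha ▸ by positivity) (by linarith)
  have hE : a * (D * m - 1) - d ^ 2 = D := by linarith
  -- Dirichlet's form: its last diagonal entry is `m`, and the divisibility makes it unimodular.
  refine exists_sq_add_sq_add_sq_eq (a := a) (b := D * m - 1) (d := d) (e := 1) (f := 0) hapos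
    (by rwa [hE]) ?_
  have hdet := mul_det_ternaryForm a (D * m - 1) m d 1 0
  refine mul_left_cancel₀ hapos.ne' ?_
  rw [hdet, hE]
  linear_combination -ha

theorem exists_sum_three_sq_of_mod_eight_eq_five {m : ℕ} (hm : m % 8 = 5) :
    ∃ x y z : ℤ, x ^ 2 + y ^ 2 + z ^ 2 = m := by
  obtain ⟨p, v, hp, hpv⟩ := exists_prime_two_mul_add_one_eq hm
  have := Fact.mk hp
  have hp4 : p % 4 = 3 := by
    have : (2 * p + 1) % 8 = 7 := by simp [hpv, Nat.mul_mod, Nat.add_mod, hm]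
    lia
  obtain ⟨d, hd⟩ := exists_two_mul_dvd_add_sq (D := (8 * v + 3 : ℕ)) (p := p)
    (by exact_mod_cast Nat.odd_iff.2 (by lia)) (Nat.odd_iff.2 (by lia))
    (jacobiSym_neg_eq_one_of_dvd (by lia) hp4 ⟨m, hpv⟩)
  have hpv' : ((8 * v + 3 : ℕ) : ℤ) * m = 2 * p + 1 := by exact_mod_cast hpv.symm
  have := hp.pos
  refine exists_sum_three_sq_of_dvd_add_sq (D := (8 * v + 3 : ℕ)) (d := d) (by positivity)
    (by lia) ?_
  rwa [hpv', add_sub_cancel_right]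

theorem exists_odd_sq_add_two_mul_sq {m x y z : ℤ} (hm : m % 4 = 1)
    (h : x ^ 2 + y ^ 2 + z ^ 2 = m) :
    ∃ k u v : ℤ, Odd k ∧ k ^ 2 + (2 * u) ^ 2 + (2 * v) ^ 2 = m := by
  subst h
  rcases Int.even_or_odd' x with ⟨x, rfl | rfl⟩ <;>
    rcases Int.even_or_odd' y with ⟨y, rfl | rfl⟩ <;>
      rcases Int.even_or_odd' z with ⟨z, rfl | rfl⟩
  · ring_nf at hm; lia
  · exact ⟨2 * z + 1, x, y, by simp, by ring⟩
  · exact ⟨2 * y + 1, x, z, by simp, by ring⟩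
  · ring_nf at hm; lia
  · exact ⟨2 * x + 1, y, z, by simp, by ring⟩
  all_goals ring_nf at hm; lia

end SumsOfThreeSquares

theorem exists_gaussianNormSq_eq_of_odd {n : ℕ} (hodd : Odd n) (hn : 1 < n) :
    ∃ γ : SpecialLinearGroup (Fin 2) GaussianInt, gaussianNormSq γ.1 = n := by
  have hmod : n ^ 2 % 8 = 1 := by
    obtain ⟨j, rfl⟩ := hodd
    obtain ⟨q, hq⟩ := Nat.even_mul_succ_self j
    lia
  have hle : 3 ^ 2 ≤ n ^ 2 := Nat.pow_le_pow_left (by grind) 2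
  obtain ⟨x, y, z, hsum⟩ := exists_sum_three_sq_of_mod_eight_eq_five (m := n ^ 2 - 4) (by lia)
  obtain ⟨k, u, v, hk, h⟩ := exists_odd_sq_add_two_mul_sq (by lia) hsum
  have hnk : Even ((n : ℤ) + k) := (by exact_mod_cast hodd : Odd (n : ℤ)).add_odd hk
  have hcast : ((n ^ 2 - 4 : ℕ) : ℤ) = (n : ℤ) ^ 2 - 4 := by simp [show 4 ≤ n ^ 2 by lia]
  exact exists_gaussianNormSq_eq_of_sq_add (by lia) hnk (h.trans hcast)

theorem sl2_gaussian_norm_sq_eq_prime_general (n : ℕ) (hn : n = 2 ∨ Odd n ∧ 1 < n) :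
    ∃ γ : Matrix.SpecialLinearGroup (Fin 2) GaussianInt,
      Zsqrtd.norm (γ.1 0 0) + Zsqrtd.norm (γ.1 0 1) +
        Zsqrtd.norm (γ.1 1 0) + Zsqrtd.norm (γ.1 1 1) = (n : ℤ) := by
  rcases hn with rfl | ⟨hodd, hn⟩
  · exact ⟨1, by simp⟩
  · exact exists_gaussianNormSq_eq_of_odd hodd hn

/-- For every prime `p` there exists `γ ∈ SL(2, ℤ[i])` with
`‖γ‖² = |a|² + |b|² + |c|² + |d|² = p`, where `|z|²` is the squared complex
absolute value of the Gaussian integer `z` (i.e. `Zsqrtd.norm`). -/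
theorem sl2_gaussian_norm_sq_eq_prime (p : ℕ) (hp : p.Prime) :
    ∃ γ : Matrix.SpecialLinearGroup (Fin 2) GaussianInt,
      Zsqrtd.norm (γ.1 0 0) + Zsqrtd.norm (γ.1 0 1) +
        Zsqrtd.norm (γ.1 1 0) + Zsqrtd.norm (γ.1 1 1) = (p : ℤ) :=
  sl2_gaussian_norm_sq_eq_prime_general p (hp.eq_two_or_odd'.imp_right (⟨·, hp.one_lt⟩))
end

section
/- Let n ≥ 3 be an odd integer and let p be an odd prime with p ∤ (n² − 4). Then there exists T ≥ 1 such that for every t ≥ T, the number of 2×4 matrices X over ℤ/p^tℤ satisfying X·Xᵀ = G_n (mod p^t) equals p^{5t} · (1 − p^{−2}) · (1 + χ_p(4 − n²)/p), i.e. equals p^{5t−3} · (p² − 1) · (p + χ_p(4 − n²)), where χ_p denotes the Legendre symbol modulo p. -/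
open Matrix

/-!
Identify a row of `X` with a quaternion. If `x`, `y` are the rows of a solution of `X * Xᵀ = G` and
`G₀₀` is a unit, then left multiplication by `star x` turns the conditions on `y` into
`re y' = G₀₁` and `normSq y' = G₀₀ * G₁₁`, because the norm is multiplicative. So there are
`r₄(G₀₀) * r₃(det G)` solutions, where `rₖ` counts representations by `k` squares. Over a local ring
in which `2` is a unit, a base change of determinant `1` makes `G₀₀` a unit whenever `det G` is.

Instead of lifting solutions by Hensel's lemma, note that the units reducing to `1` are squares, so
that `rₖ` on units depends only on the residue class. Over a field with `q` elements and quadratic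
character `χ`, splitting off two squares and evaluating a Jacobi sum gives
`r₂₊ₖ(c) = (q - ε) * q ^ k + ε * q * rₖ(c)` with `ε = χ(-1)`.
-/

/-- The number of representations of `c` as an ordered sum of `k` squares (`0` if infinite). -/
noncomputable def sumSqCount {R : Type*} [Semiring R] (k : ℕ) (c : R) : ℕ :=
  Nat.card {v : Fin k → R // ∑ i, v i ^ 2 = c}

lemma sumSqCount_unit_sq_mul {R : Type*} [CommSemiring R] (k : ℕ) (w : Rˣ) (c : R) :
    sumSqCount k ((w : R) ^ 2 * c) = sumSqCount k c := by
  refine (Nat.card_congr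
    ((Equiv.piCongrRight fun _ => Units.mulLeft w).subtypeEquiv fun v => ?_)).symm
  simp only [Equiv.piCongrRight_apply, Pi.map_apply, Units.mulLeft_apply, mul_pow,
    ← Finset.mul_sum, (w.isUnit.pow 2).mul_right_inj]

lemma sumSqCount_add {R : Type*} [Ring R] [Fintype R] (m n : ℕ) (c : R) :
    sumSqCount (m + n) c = ∑ u, sumSqCount m u * sumSqCount n (c - u) := by
  have e (u : R) : {v : {v : Fin (m + n) → R // ∑ i, v i ^ 2 = c} //
      ∑ i, v.1 (Fin.castAdd n i) ^ 2 = u} ≃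
      {x : Fin m → R // ∑ i, x i ^ 2 = u} × {y : Fin n → R // ∑ i, y i ^ 2 = c - u} :=
    { toFun v := (⟨fun i => v.1.1 (Fin.castAdd n i), v.2⟩, ⟨fun i => v.1.1 (Fin.natAdd m i), by
        rw [eq_sub_iff_add_eq']
        exact (congrArg (· + _) v.2.symm).trans ((Fin.sum_univ_add _).symm.trans v.1.2)⟩)
      invFun q := ⟨⟨Fin.append q.1.1 q.2.1, by simp [Fin.sum_univ_add, q.1.2, q.2.2]⟩, by
        simp [q.1.2]⟩
      left_inv v := Subtype.ext (Subtype.ext Fin.append_castAdd_natAdd)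
      right_inv q := by simp }
  rw [sumSqCount, ← Nat.card_congr (Equiv.sigmaFiberEquiv
    fun v : {v : Fin (m + n) → R // ∑ i, v i ^ 2 = c} => ∑ i, v.1 (Fin.castAdd n i) ^ 2),
    Nat.card_sigma]
  simp only [sumSqCount, Nat.card_congr (e _), Nat.card_prod]

lemma sum_sumSqCount {R : Type*} [Semiring R] [Fintype R] (k : ℕ) :
    ∑ u : R, sumSqCount k u = Fintype.card R ^ k := by
  simp only [sumSqCount]
  rw [← Nat.card_sigma, Nat.card_congr (Equiv.sigmaFiberEquiv _)]
  simp

section FiniteField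

variable {F : Type*} [Field F] [Fintype F]

lemma sum_mulChar_mul_sub {S : Type*} [CommRing S] (χ ψ : MulChar F S) {c : F} (hc : c ≠ 0) :
    ∑ u, χ u * ψ (c - u) = χ c * ψ c * jacobiSum χ ψ := by
  rw [jacobiSum, Finset.mul_sum, ← Equiv.sum_comp (Equiv.mulLeft₀ c hc) fun u => χ u * ψ (c - u)]
  refine Finset.sum_congr rfl fun u _ => ?_
  rw [show Equiv.mulLeft₀ c hc u = c * u from rfl, ← mul_one_sub, map_mul, map_mul]
  ring

variable [DecidableEq F]

lemma sum_quadraticChar_mul_quadraticChar_sub (hF : ringChar F ≠ 2) (c : F) :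
    ∑ u, quadraticChar F u * quadraticChar F (c - u) =
      ((if c = 0 then Fintype.card F else 0) - 1) * quadraticChar F (-1) := by
  split_ifs with hc
  · have h (u : F) : quadraticChar F u * quadraticChar F (c - u) =
        (1 - if u = 0 then 1 else 0) * quadraticChar F (-1) := by
      split_ifs with hu
      · simp [hu]
      · rw [hc, zero_sub, neg_eq_neg_one_mul, map_mul]
        linear_combination quadraticChar F (-1) * quadraticChar_sq_one hu
    simp only [h, ← Finset.sum_mul, Finset.sum_sub_distrib]
    simp
  · have hχ := jacobiSum_nontrivial_inv (quadraticChar_ne_one hF)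
    rw [(quadraticChar_isQuadratic F).inv] at hχ
    rw [sum_mulChar_mul_sub _ _ hc, hχ, ← sq, quadraticChar_sq_one hc]
    ring

lemma sumSqCount_one (hF : ringChar F ≠ 2) (c : F) :
    (sumSqCount 1 c : ℤ) = quadraticChar F c + 1 := by
  rw [← quadraticChar_card_sqrts hF, sumSqCount, Nat.cast_inj, Set.toFinset_card,
    ← Nat.card_eq_fintype_card]
  exact Nat.card_congr ((Equiv.funUnique (Fin 1) F).subtypeEquiv fun v => by simp)

lemma sumSqCount_two (hF : ringChar F ≠ 2) (c : F) :
    (sumSqCount 2 c : ℤ) = Fintype.card F +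
      ((if c = 0 then Fintype.card F else 0) - 1) * quadraticChar F (-1) := by
  have hsub : ∑ u, quadraticChar F (c - u) = 0 :=
    ((Equiv.subLeft c).sum_comp (quadraticChar F)).trans (quadraticChar_sum_zero hF)
  rw [← sum_quadraticChar_mul_quadraticChar_sub hF, sumSqCount_add 1 1]
  push_cast
  simp only [sumSqCount_one hF, add_mul, mul_add, one_mul, mul_one, Finset.sum_add_distrib, hsub,
    quadraticChar_sum_zero hF, Finset.sum_const, Finset.card_univ, nsmul_eq_mul]
  ring

lemma sumSqCount_two_add (hF : ringChar F ≠ 2) (k : ℕ) (c : F) :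
    (sumSqCount (2 + k) c : ℤ) =
      (Fintype.card F - quadraticChar F (-1)) * Fintype.card F ^ k +
        Fintype.card F * quadraticChar F (-1) * sumSqCount k c := by
  have htotal : ∑ u, (sumSqCount k (c - u) : ℤ) = Fintype.card F ^ k := by
    rw [← Nat.cast_pow, ← sum_sumSqCount, Nat.cast_sum]
    exact (Equiv.subLeft c).sum_comp fun u => (sumSqCount k u : ℤ)
  rw [sumSqCount_add, ← htotal, Finset.mul_sum]
  have hsplit (u : F) : (sumSqCount 2 u * sumSqCount k (c - u) : ℤ) =
      (Fintype.card F - quadraticChar F (-1)) * sumSqCount k (c - u) +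
        if u = 0 then Fintype.card F * quadraticChar F (-1) * sumSqCount k (c - u) else 0 := by
    rw [sumSqCount_two hF]
    split_ifs <;> ring
  push_cast
  simp [hsplit, Finset.sum_add_distrib, -quadraticChar_apply]

lemma sumSqCount_three (hF : ringChar F ≠ 2) (c : F) :
    (sumSqCount 3 c : ℤ) = Fintype.card F ^ 2 + Fintype.card F * quadraticChar F (-c) := by
  rw [sumSqCount_two_add hF 1, sumSqCount_one hF, neg_eq_neg_one_mul c, map_mul]
  ring

omit [DecidableEq F] in
lemma sumSqCount_four (hF : ringChar F ≠ 2) {c : F} (hc : c ≠ 0) :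
    (sumSqCount 4 c : ℤ) = Fintype.card F ^ 3 - Fintype.card F := by
  classical
  rw [sumSqCount_two_add hF 2, sumSqCount_two hF, if_neg hc]
  have hsq := quadraticChar_sq_one (neg_ne_zero.2 (one_ne_zero (α := F)))
  push_cast
  linear_combination (-Fintype.card F : ℤ) * hsq

end FiniteField

section Reduction

variable {A B : Type*} [AddGroup A] [AddGroup B] {f : A →+ B}

lemma card_fiber_eq_card_ker (hf : Function.Surjective f) (b : B) :
    Nat.card {a // f a = b} = Nat.card f.ker :=
  Nat.card_congr (f.fiberEquivKerOfSurjective hf b)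

lemma card_subtype_map_comp [Finite A] {ι : Type*} [Fintype ι]
    (hf : Function.Surjective f) (P : (ι → B) → Prop) :
    Nat.card {v : ι → A // P (f ∘ v)} =
      Nat.card f.ker ^ Fintype.card ι * Nat.card {w // P w} := by
  have : Finite B := .of_surjective f hf
  have := Fintype.ofFinite {w // P w}
  have hfiber (w : ι → B) : Nat.card {v : ι → A // f ∘ v = w} =
      Nat.card f.ker ^ Fintype.card ι := by
    have e : {v : ι → A // f ∘ v = w} ≃ ∀ i, {a // f a = w i} :=
      (Equiv.subtypeEquivRight fun _ => funext_iff).trans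
        (Equiv.subtypePiEquivPi (p := fun i a => f a = w i))
    simp [Nat.card_congr e, Nat.card_pi, card_fiber_eq_card_ker hf]
  rw [← Nat.card_congr (Equiv.sigmaSubtypeFiberEquivSubtype (f ∘ ·) fun _ => Iff.rfl),
    Nat.card_sigma]
  simp [hfiber, mul_comm]

end Reduction

section LocalHom

variable {R S : Type*} [CommRing R] [Finite R] [CommRing S] {f : R →+* S} [IsLocalHom f]

-- Squaring is injective on the finite set `1 + ker f`, hence surjective.
lemma exists_units_sq_eq_of_map_eq_one (h2 : IsUnit (2 : R)) {u : R} (hu : f u = 1) :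
    ∃ w : Rˣ, (w : R) ^ 2 = u := by
  have hinj : Function.Injective fun w : {w : R // f w = 1} =>
      (⟨w.1 ^ 2, by rw [map_pow, w.2, one_pow]⟩ : {w : R // f w = 1}) := by
    rintro ⟨v, hv⟩ ⟨w, hw⟩ hvw
    have hadd : IsUnit (v + w) := by
      rw [← isUnit_map_iff f, map_add, hv, hw, one_add_one_eq_two, ← map_ofNat f 2]
      exact h2.map f
    have hmul : (v + w) * (v - w) = 0 := by
      linear_combination congrArg Subtype.val hvw
    exact Subtype.ext (sub_eq_zero.1 (hadd.mul_right_eq_zero.1 hmul))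
  obtain ⟨⟨w, hw⟩, hwu⟩ := Finite.surjective_of_injective hinj ⟨u, hu⟩
  have hwunit : IsUnit w := (isUnit_map_iff f w).1 (hw ▸ isUnit_one)
  exact ⟨hwunit.unit, congrArg Subtype.val hwu⟩

lemma sumSqCount_eq_of_map_eq (h2 : IsUnit (2 : R)) (k : ℕ) {x c : R} (hc : IsUnit c)
    (hx : f x = f c) : sumSqCount k x = sumSqCount k c := by
  obtain ⟨c, rfl⟩ := hc
  have hone : f (x * ↑c⁻¹) = 1 := by rw [map_mul, hx, ← map_mul, c.mul_inv, map_one]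
  obtain ⟨w, hw⟩ := exists_units_sq_eq_of_map_eq_one h2 hone
  rw [← sumSqCount_unit_sq_mul _ w (c : R), hw, Units.inv_mul_cancel_right]

-- Both sides times `Nat.card (ker f)` count the vectors `v` with `f (∑ i, v i ^ 2) = f c`.
lemma sumSqCount_succ_eq_card_ker_pow_mul (hf : Function.Surjective f) (h2 : IsUnit (2 : R))
    (k : ℕ) {c : R} (hc : IsUnit c) :
    sumSqCount (k + 1) c = Nat.card (RingHom.ker f) ^ k * sumSqCount (k + 1) (f c) := by
  have hfiberwise : Nat.card {v : Fin (k + 1) → R // f (∑ i, v i ^ 2) = f c} =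
      Nat.card (RingHom.ker f) * sumSqCount (k + 1) c := by
    have := Fintype.ofFinite {x // f x = f c}
    have hcard : Nat.card {x // f x = f c} = Nat.card (RingHom.ker f) :=
      card_fiber_eq_card_ker (f := f.toAddMonoidHom) hf (f c)
    rw [← Nat.card_congr (Equiv.sigmaSubtypeFiberEquivSubtype (q := fun x => f x = f c)
      (fun v : Fin (k + 1) → R => ∑ i, v i ^ 2) fun _ => Iff.rfl), Nat.card_sigma, ← hcard]
    refine (Finset.sum_congr rfl fun x _ => sumSqCount_eq_of_map_eq h2 _ hc x.2).trans ?_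
    simp
  have hreduce : Nat.card {v : Fin (k + 1) → R // f (∑ i, v i ^ 2) = f c} =
      Nat.card (RingHom.ker f) ^ (k + 1) * sumSqCount (k + 1) (f c) := by
    have hmod := card_subtype_map_comp (f := f.toAddMonoidHom) hf
      fun v : Fin (k + 1) → S => ∑ i, v i ^ 2 = f c
    simpa [sumSqCount] using hmod
  refine Nat.eq_of_mul_eq_mul_left (Nat.card_pos (α := RingHom.ker f)) ?_
  rw [← hfiberwise, hreduce, pow_succ']
  ring

end LocalHom

section Quaternion

lemma eq_iff_of_isSymm_fin_two {α : Type*} {A B : Matrix (Fin 2) (Fin 2) α} (hA : A.IsSymm)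
    (hB : B.IsSymm) : A = B ↔ A 0 0 = B 0 0 ∧ A 0 1 = B 0 1 ∧ A 1 1 = B 1 1 := by
  rw [← Matrix.ext_iff]
  simp only [Fin.forall_fin_two, hA.apply 0 1, hB.apply 0 1]
  tauto

open Quaternion

variable {R : Type*} [CommRing R]

lemma card_normSq_eq (c : R) : Nat.card {x : ℍ[R] // normSq x = c} = sumSqCount 4 c :=
  Nat.card_congr ((equivTuple R).subtypeEquiv fun x => by
    simp [normSq_def', Fin.sum_univ_four, equivTuple_apply])

lemma card_re_eq_and_normSq_eq (h c : R) :
    Nat.card {x : ℍ[R] // x.re = h ∧ normSq x = c} = sumSqCount 3 (c - h ^ 2) := by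
  refine Nat.card_congr
    { toFun x := ⟨![x.1.imI, x.1.imJ, x.1.imK], ?_⟩
      invFun v := ⟨⟨h, v.1 0, v.1 1, v.1 2⟩, rfl, ?_⟩
      left_inv x := Subtype.ext (Quaternion.ext _ _ x.2.1.symm rfl rfl rfl)
      right_inv v := Subtype.ext (by ext i; fin_cases i <;> rfl) }
  · obtain ⟨x, rfl, rfl⟩ := x
    simp only [Fin.sum_univ_three, normSq_def', cons_val_zero, cons_val_one, cons_val]
    ring
  · have hv := v.2
    rw [Fin.sum_univ_three] at hv
    linear_combination normSq_def' (⟨h, v.1 0, v.1 1, v.1 2⟩ : ℍ[R]) + hv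

lemma isUnit_of_isUnit_normSq {x : ℍ[R]} (hx : IsUnit (normSq x)) : IsUnit x := by
  have hcomm : Commute x (star x) := (star_comm_self' x).symm
  have hmul : IsUnit (x * star x) := by
    rw [self_mul_star]
    exact hx.map (algebraMap R ℍ[R])
  exact (hcomm.isUnit_mul_iff.1 hmul).1

lemma card_re_star_mul_eq_and_normSq_eq {x : ℍ[R]} (hx : IsUnit (normSq x)) (h b : R) :
    Nat.card {y : ℍ[R] // (star x * y).re = h ∧ normSq y = b} =
      sumSqCount 3 (normSq x * b - h ^ 2) := by
  rw [← card_re_eq_and_normSq_eq]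
  refine Nat.card_congr ((isUnit_of_isUnit_normSq hx).star.unit.mulLeft.subtypeEquiv fun y => ?_)
  simp [hx.mul_right_inj]

lemma equivTuple_dotProduct_equivTuple (x y : ℍ[R]) :
    equivTuple R x ⬝ᵥ equivTuple R y = (star x * y).re := by
  simp [dotProduct, Fin.sum_univ_four, equivTuple_apply, re_mul]

lemma equivTuple_dotProduct_self (x : ℍ[R]) : equivTuple R x ⬝ᵥ equivTuple R x = normSq x := by
  rw [equivTuple_dotProduct_equivTuple, star_mul_self, re_coe]

lemma card_mul_transpose_eq_card_quaternion_pairs {G : Matrix (Fin 2) (Fin 2) R}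
    (hG : G.IsSymm) :
    Nat.card {X : Matrix (Fin 2) (Fin 4) R // X * Xᵀ = G} =
      Nat.card {q : ℍ[R] × ℍ[R] // normSq q.1 = G 0 0 ∧
        (star q.1 * q.2).re = G 0 1 ∧ normSq q.2 = G 1 1} := by
  let e : Matrix (Fin 2) (Fin 4) R ≃ ℍ[R] × ℍ[R] :=
    (finTwoArrowEquiv (Fin 4 → R)).trans ((equivTuple R).symm.prodCongr (equivTuple R).symm)
  refine Nat.card_congr (e.subtypeEquiv fun X => ?_)
  have hrow (i : Fin 2) : equivTuple R ((equivTuple R).symm (X i)) = X i :=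
    (equivTuple R).apply_symm_apply (X i)
  have hsymm : (X * Xᵀ).IsSymm := by rw [IsSymm, transpose_mul, transpose_transpose]
  change _ ↔ normSq ((equivTuple R).symm (X 0)) = _ ∧
    (star ((equivTuple R).symm (X 0)) * (equivTuple R).symm (X 1)).re = _ ∧
    normSq ((equivTuple R).symm (X 1)) = _
  simp only [eq_iff_of_isSymm_fin_two hsymm hG, ← equivTuple_dotProduct_self,
    ← equivTuple_dotProduct_equivTuple, hrow, mul_apply', transpose_apply]

lemma card_mul_transpose_eq_of_isUnit_apply_zero_zero [Finite R]
    {G : Matrix (Fin 2) (Fin 2) R} (hG : G.IsSymm) (ha : IsUnit (G 0 0)) :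
    Nat.card {X : Matrix (Fin 2) (Fin 4) R // X * Xᵀ = G} =
      sumSqCount 4 (G 0 0) * sumSqCount 3 G.det := by
  have : Finite ℍ[R] := .of_equiv _ (equivTuple R).symm
  have := Fintype.ofFinite {x : ℍ[R] // normSq x = G 0 0}
  let e : {q : ℍ[R] × ℍ[R] // normSq q.1 = G 0 0 ∧
      (star q.1 * q.2).re = G 0 1 ∧ normSq q.2 = G 1 1} ≃
      Σ x : {x : ℍ[R] // normSq x = G 0 0},
        {y : ℍ[R] // (star x.1 * y).re = G 0 1 ∧ normSq y = G 1 1} :=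
    { toFun q := ⟨⟨q.1.1, q.2.1⟩, q.1.2, q.2.2⟩
      invFun s := ⟨(s.1, s.2), s.1.2, s.2.2⟩ }
  have hfiber (x : {x : ℍ[R] // normSq x = G 0 0}) :
      Nat.card {y : ℍ[R] // (star x.1 * y).re = G 0 1 ∧ normSq y = G 1 1} =
        sumSqCount 3 G.det := by
    rw [card_re_star_mul_eq_and_normSq_eq (x.2.symm ▸ ha), x.2, det_fin_two, hG.apply 0 1, sq]
  rw [card_mul_transpose_eq_card_quaternion_pairs hG, Nat.card_congr e, Nat.card_sigma,
    Finset.sum_congr rfl fun x _ => hfiber x, ← card_normSq_eq]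
  simp

end Quaternion

section BaseChange

variable {R m n : Type*} [CommRing R] [Fintype m] [DecidableEq m] [Fintype n]

lemma card_mul_transpose_eq_conj {U : Matrix m m R} (hU : IsUnit U) (G : Matrix m m R) :
    Nat.card {X : Matrix m n R // X * Xᵀ = U * G * Uᵀ} =
      Nat.card {X : Matrix m n R // X * Xᵀ = G} := by
  obtain ⟨V, hUV, hVU⟩ := isUnit_iff_exists.1 hU
  let e : Matrix m n R ≃ Matrix m n R :=
    { toFun X := U * X
      invFun X := V * X
      left_inv X := by simp only [← Matrix.mul_assoc, hVU, Matrix.one_mul]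
      right_inv X := by simp only [← Matrix.mul_assoc, hUV, Matrix.one_mul] }
  refine (Nat.card_congr (e.subtypeEquiv fun X => ?_)).symm
  have hgram : U * X * (U * X)ᵀ = U * (X * Xᵀ) * Uᵀ := by
    simp only [transpose_mul, Matrix.mul_assoc]
  rw [show e X = U * X from rfl, hgram, ((isUnit_transpose U).2 hU).mul_left_inj, hU.mul_right_inj]

lemma exists_det_eq_one_and_isUnit_conj_apply_zero_zero [IsLocalRing R]
    (h2 : IsUnit (2 : R)) {G : Matrix (Fin 2) (Fin 2) R} (hG : G.IsSymm) (hdet : IsUnit G.det) :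
    ∃ U : Matrix (Fin 2) (Fin 2) R, U.det = 1 ∧ IsUnit ((U * G * Uᵀ) 0 0) := by
  by_cases ha : IsUnit (G 0 0)
  · exact ⟨1, det_one, by simpa using ha⟩
  by_cases hb : IsUnit (G 1 1)
  · exact ⟨!![0, 1; -1, 0], by simp [det_fin_two],
      by simpa [Matrix.mul_apply, Fin.sum_univ_two, -cons_mul] using hb⟩
  have hh : IsUnit (G 0 1) := by
    by_contra hh
    refine (IsLocalRing.mem_maximalIdeal _).1 ?_ hdet
    rw [det_fin_two]
    exact Ideal.sub_mem _ (Ideal.mul_mem_right _ _ ha) (Ideal.mul_mem_right _ _ hh)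
  let U : Matrix (Fin 2) (Fin 2) R := !![1, 1; 0, 1]
  have hpolar : (U * G * Uᵀ) 0 0 - G 0 0 - G 1 1 = 2 * G 0 1 := by
    simp only [U, Matrix.mul_apply, Fin.sum_univ_two, transpose_apply, hG.apply 0 1, of_apply,
      cons_val', cons_val_fin_one, cons_val_zero, cons_val_one, one_mul, mul_one]
    ring
  refine ⟨U, by simp [U, det_fin_two], ?_⟩
  by_contra hc
  refine (IsLocalRing.mem_maximalIdeal _).1 ?_ (hpolar ▸ h2.mul hh)
  exact Ideal.sub_mem _ (Ideal.sub_mem _ hc ha) hb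

end BaseChange

lemma card_mul_transpose_eq_of_isUnit_det {R F : Type*} [CommRing R] [Finite R] [Field F]
    [Fintype F] [DecidableEq F] {f : R →+* F} [IsLocalHom f] (hf : Function.Surjective f)
    (hF : ringChar F ≠ 2) {G : Matrix (Fin 2) (Fin 2) R} (hG : G.IsSymm) (hdet : IsUnit G.det) :
    (Nat.card {X : Matrix (Fin 2) (Fin 4) R // X * Xᵀ = G} : ℤ) =
      Nat.card (RingHom.ker f) ^ 5 * Fintype.card F ^ 2 * (Fintype.card F ^ 2 - 1) *
        (Fintype.card F + quadraticChar F (f (-G.det))) := by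
  have := f.domain_isLocalRing
  have h2 : IsUnit (2 : R) := by
    rw [← isUnit_map_iff f, map_ofNat]
    exact (Ring.two_ne_zero hF).isUnit
  obtain ⟨U, hU, hunit⟩ := exists_det_eq_one_and_isUnit_conj_apply_zero_zero h2 hG hdet
  have hconj : (U * G * Uᵀ).IsSymm := by
    rw [IsSymm, transpose_mul, transpose_mul, transpose_transpose, hG.eq, Matrix.mul_assoc]
  have hconj_det : (U * G * Uᵀ).det = G.det := by simp [hU]
  rw [← card_mul_transpose_eq_conj ((isUnit_iff_isUnit_det U).2 (hU ▸ isUnit_one)) G,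
    card_mul_transpose_eq_of_isUnit_apply_zero_zero hconj hunit, hconj_det,
    sumSqCount_succ_eq_card_ker_pow_mul hf h2 3 hunit,
    sumSqCount_succ_eq_card_ker_pow_mul hf h2 2 hdet]
  push_cast
  rw [sumSqCount_four hF ((isUnit_map_iff f _).2 hunit).ne_zero, sumSqCount_three hF, ← map_neg f]
  ring

section ZMod

lemma card_ker_castHom_zmod_pow {p : ℕ} [NeZero p] {t : ℕ} (ht : t ≠ 0) :
    Nat.card (RingHom.ker (ZMod.castHom (dvd_pow_self p ht) (ZMod p))) = p ^ (t - 1) := by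
  set f := ZMod.castHom (dvd_pow_self p ht) (ZMod p)
  have hquot : Nat.card (ZMod (p ^ t) ⧸ RingHom.ker f) = p := by
    rw [Nat.card_congr (RingHom.quotientKerEquivOfSurjective (ZMod.castHom_surjective _)).toEquiv,
      Nat.card_zmod]
  have hcard := Submodule.card_eq_card_quotient_mul_card (RingHom.ker f)
  rw [hquot, Nat.card_zmod] at hcard
  refine Nat.eq_of_mul_eq_mul_right (NeZero.pos p) ?_
  rw [← hcard, pow_sub_one_mul ht]

variable {p : ℕ} [Fact p.Prime] {t : ℕ}

lemma isUnit_intCast_zmod_pow_iff_not_dvd (ht : t ≠ 0) {z : ℤ} :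
    IsUnit (z : ZMod (p ^ t)) ↔ ¬ (p : ℤ) ∣ z := by
  rw [ZMod.coe_int_isUnit_iff_isCoprime, Nat.cast_pow, IsCoprime.pow_left_iff ht.bot_lt,
    (Nat.prime_iff_prime_int.1 Fact.out).coprime_iff_not_dvd]

lemma isLocalHom_castHom_zmod_pow (ht : t ≠ 0) :
    IsLocalHom (ZMod.castHom (dvd_pow_self p ht) (ZMod p)) where
  map_nonunit a ha := by
    obtain ⟨z, rfl⟩ := ZMod.intCast_surjective a
    rw [map_intCast, isUnit_iff_ne_zero, Ne, ZMod.intCast_zmod_eq_zero_iff_dvd] at ha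
    exact (isUnit_intCast_zmod_pow_iff_not_dvd ht).2 ha

end ZMod

theorem local_density_unramified_general {G : Matrix (Fin 2) (Fin 2) ℤ} (hG : G.IsSymm)
    {p : ℕ} [Fact p.Prime] (hp : p ≠ 2) (hdet : ¬ (p : ℤ) ∣ G.det) {t : ℕ} (ht : t ≠ 0) :
    (Nat.card {X : Matrix (Fin 2) (Fin 4) (ZMod (p ^ t)) //
        X * Xᵀ = G.map (Int.cast : ℤ → ZMod (p ^ t))} : ℤ) =
      (p : ℤ) ^ (5 * t - 3) * ((p : ℤ) ^ 2 - 1) * (p + legendreSym p (-G.det)) := by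
  have := isLocalHom_castHom_zmod_pow (p := p) ht
  have hdet_cast : (G.map (Int.cast : ℤ → ZMod (p ^ t))).det = (G.det : ℤ) :=
    (Int.cast_det G).symm
  have hunit : IsUnit (G.map (Int.cast : ℤ → ZMod (p ^ t))).det := by
    rwa [hdet_cast, isUnit_intCast_zmod_pow_iff_not_dvd ht]
  have : NeZero (p ^ t) := ⟨pow_ne_zero t (Fact.out : p.Prime).ne_zero⟩
  rw [card_mul_transpose_eq_of_isUnit_det
    (ZMod.castHom_surjective (dvd_pow_self p ht)) (by rwa [ZMod.ringChar_zmod_n])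
    (hG.map _) hunit, card_ker_castHom_zmod_pow ht, ZMod.card, hdet_cast, legendreSym,
    ← Int.cast_neg, map_intCast, Nat.cast_pow, ← pow_mul, ← pow_add,
    show (t - 1) * 5 + 2 = 5 * t - 3 by lia]

/-- Unramified local density: for odd `n ≥ 3` and an odd prime `p ∤ n² − 4`, for all
sufficiently large `t` the number of `2 × 4` matrices `X` over `ℤ/p^tℤ` with
`X Xᵀ = Gₙ = diag(n+2, n−2)` equals `p^{5t−3} (p² − 1) (p + χ_p(4 − n²))`, where
`χ_p` is the Legendre symbol mod `p`. -/
theorem local_density_unramified (n : ℤ) (hodd : Odd n) (hn : 3 ≤ n)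
    (p : ℕ) [Fact p.Prime] (hp : p ≠ 2) (hpn : ¬ (p : ℤ) ∣ n ^ 2 - 4) :
    ∃ T : ℕ, 1 ≤ T ∧ ∀ t : ℕ, T ≤ t →
      (Nat.card {X : Matrix (Fin 2) (Fin 4) (ZMod (p ^ t)) //
          X * Xᵀ = !![(n : ZMod (p ^ t)) + 2, 0; 0, (n : ZMod (p ^ t)) - 2]} : ℤ)
        = (p : ℤ) ^ (5 * t - 3) * ((p : ℤ) ^ 2 - 1) * ((p : ℤ) + legendreSym p (4 - n ^ 2)) := by
  have hdet : !![n + 2, 0; 0, n - 2].det = n ^ 2 - 4 := by rw [det_fin_two_of]; ring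
  have hsymm : !![n + 2, 0; 0, n - 2].IsSymm := by
    ext i j; fin_cases i <;> fin_cases j <;> rfl
  refine ⟨1, le_rfl, fun t ht => ?_⟩
  have hcast : !![n + 2, 0; 0, n - 2].map (Int.cast : ℤ → ZMod (p ^ t)) =
      !![(n : ZMod (p ^ t)) + 2, 0; 0, (n : ZMod (p ^ t)) - 2] := by
    ext i j; fin_cases i <;> fin_cases j <;> simp
  rw [← hcast, ← neg_sub (n ^ 2), ← hdet]
  exact local_density_unramified_general hsymm hp (hdet ▸ hpn) (Nat.one_le_iff_ne_zero.1 ht)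
end

section
/- Let n ≥ 3 be an odd integer and let p ≥ 3 be a prime dividing n² − 4. Let a be the p-adic valuation of n + 2 and b the p-adic valuation of n − 2, with m = (n + 2)/p^a and k = (n − 2)/p^b (so p ∤ mk), and assume a ≤ b (otherwise exchange the roles of (a, m) and (b, k)). If a + b is even, then there exists T ≥ 1 such that for every t ≥ T, the number of 2×4 matrices X over ℤ/p^tℤ satisfying X·Xᵀ = G_n (mod p^t) equals p^{5t} · (p + 1) · ((p^{a+1} − 1)(χ_p(−mk) − 1) + (a + 1)(p² − 1) p^{(a+b)/2}) / p^{3 + (a+b)/2}, where χ_p denotes the Legendre symbol modulo p. -/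
open Matrix

/-!
Since `p` is odd, it divides only one of `n + 2` and `n - 2`, so `a = 0` and `n + 2` is a unit.
Reading the rows of `X` as quaternions `x` and `y` over `R = ℤ/p^tℤ`, the equation
`X Xᵀ = diag(m, d)` says that `N x = m`, `N y = d` and `Re (x̄ y) = 0`. For `m` a unit,
`(x, y) ↦ (x, x̄ y)` is a bijection onto the pairs `(x, w)` with `N x = m`, `Re w = 0` and
`N w = m d`, so the count is a product.

As `-1 = α ^ 2 + β ^ 2` in `R` and `2` is a unit, the quaternions over `R` are the `2 × 2` matrices,
with norm the determinant. The first factor is thus the number of matrices of determinant `m`, and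
the second the number of points of the quadric `u v = s ^ 2 + e`, where `e = m d`. When `e` is a
unit, the latter is found by lifting square roots from `ℤ/pℤ`. When `p ^ 2 ∣ e`, the points with `u`
or `v` a unit are counted directly, and the others are `p` times a solution for `e / p ^ 2` modulo
`p ^ (t - 2)`, each such solution arising `p ^ 3` times; this recursion exhausts the even valuation
of `e`.
-/

namespace LocalDensity

section Counting

lemma ncard_setOf_isUnit (M : Type*) [Monoid M] : {u : M | IsUnit u}.ncard = Nat.card Mˣ :=
  Set.ncard_range_of_injective Units.val_injective

lemma ncard_setOf_mul_eq_and_isUnit {α M : Type*} [Monoid M] (S : Set α) (F : α → M) :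
    {x : α × M × M | x.1 ∈ S ∧ x.2.1 * x.2.2 = F x.1 ∧ IsUnit x.2.1}.ncard =
      S.ncard * Nat.card Mˣ := by
  rw [← ncard_setOf_isUnit, ← Set.ncard_prod]
  refine Set.BijOn.ncard_eq (f := fun x ↦ (x.1, x.2.1)) ⟨?_, ?_, ?_⟩
  · rintro x ⟨hS, -, hu⟩
    exact ⟨hS, hu⟩
  · rintro ⟨a, u, v⟩ ⟨-, hv, hu⟩ ⟨a', u', v'⟩ ⟨-, hv', -⟩ h
    obtain ⟨rfl, rfl⟩ := Prod.mk.inj h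
    exact congrArg (fun w ↦ (a, u, w)) (hu.mul_left_cancel (hv.trans hv'.symm))
  · rintro ⟨a, u⟩ ⟨hS, hu⟩
    obtain ⟨u, rfl⟩ := hu
    exact ⟨(a, ↑u, ↑u⁻¹ * F a), ⟨hS, u.mul_inv_cancel_left _, u.isUnit⟩, rfl⟩

lemma ncard_preimage_mul_ncard_range {G H : Type*} [AddGroup G] [AddGroup H] (f : G →+ H)
    (S : Set H) :
    (f ⁻¹' S).ncard * (Set.range f).ncard = Nat.card G * (S ∩ Set.range f).ncard := by
  choose! σ hσ using fun y (hy : y ∈ Set.range f) ↦ hy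
  have preimage_ncard (S : Set H) :
      (f ⁻¹' S).ncard = (f.ker : Set G).ncard * (S ∩ Set.range f).ncard := by
    rw [← Set.ncard_prod]
    refine Set.BijOn.ncard_eq (f := fun x ↦ (x - σ (f x), f x)) ⟨?_, ?_, ?_⟩
    · intro x hx
      exact ⟨by simp [AddMonoidHom.mem_ker, hσ (f x) ⟨x, rfl⟩], hx, x, rfl⟩
    · intro x _ y _ h
      obtain ⟨h, hfxy⟩ := Prod.mk.inj h
      rwa [hfxy, sub_left_inj] at h
    · rintro ⟨k, s⟩ ⟨hk, hs, hrange⟩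
      have hfs : f (k + σ s) = s := by rw [map_add, hk, hσ s hrange, zero_add]
      exact ⟨k + σ s, by rwa [Set.mem_preimage, hfs], by simp [hfs]⟩
  rw [preimage_ncard, ← Set.ncard_univ G, ← Set.preimage_univ, preimage_ncard, Set.univ_inter]
  ring

lemma ncard_preimage_mul_card_of_surjective {G H : Type*} [AddGroup G] [AddGroup H] (f : G →+ H)
    (hf : Function.Surjective f) (S : Set H) :
    (f ⁻¹' S).ncard * Nat.card H = Nat.card G * S.ncard := by
  rw [← Set.ncard_univ H, ← hf.range_eq, ncard_preimage_mul_ncard_range, hf.range_eq,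
    Set.inter_univ]

lemma ncard_preimage_equiv {α β : Type*} (e : α ≃ β) (s : Set β) : (e ⁻¹' s).ncard = s.ncard :=
  congrArg ENat.toNat (Set.encard_preimage_of_bijective e.bijective s)

/-- The map on triples induced by an additive map, used to reduce points `(s, u, v)` of an
affine quadric and to multiply them by `p`. -/
def mapTriple {G H : Type*} [AddZeroClass G] [AddZeroClass H] (f : G →+ H) :
    G × G × G →+ H × H × H :=
  f.prodMap (f.prodMap f)

lemma range_mapTriple {G H : Type*} [AddZeroClass G] [AddZeroClass H] (f : G →+ H) :
    Set.range (mapTriple f) = Set.range f ×ˢ Set.range f ×ˢ Set.range f := by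
  change Set.range (Prod.map f (Prod.map f f)) = _
  rw [Set.range_prodMap, Set.range_prodMap]

end Counting

section SquareRoots

open Polynomial in
lemma existsUnique_sq_eq_of_isNilpotent_sub {R : Type*} [CommRing R] {x z : R}
    (h2x : IsUnit (2 * x)) (hx : IsNilpotent (x ^ 2 - z)) :
    ∃! r : R, IsNilpotent (x - r) ∧ r ^ 2 = z := by
  have aeval_sub_C (y : R) : aeval y (X ^ 2 - C z : R[X]) = y ^ 2 - z := by simp
  have aeval_derivative : aeval x (derivative (X ^ 2 - C z : R[X])) = 2 * x := by
    simp [one_add_one_eq_two]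
  have existsUnique_root := existsUnique_nilpotent_sub_and_aeval_eq_zero (P := X ^ 2 - C z) (x := x)
    (by rwa [aeval_sub_C]) (by rwa [aeval_derivative])
  simpa only [aeval_sub_C, sub_eq_zero (b := z)] using existsUnique_root

variable {R K : Type*} [CommRing R] [IsLocalRing R] [IsArtinianRing R] [Field K]

lemma isUnit_iff_map_ne_zero (φ : R →+* K) {x : R} : IsUnit x ↔ φ x ≠ 0 := by
  refine ⟨fun hx ↦ (hx.map φ).ne_zero, fun hx ↦ by_contra fun hx' ↦ hx ?_⟩
  exact ((Ring.KrullDimLE.isNilpotent_iff_mem_nonunits.2 hx').map φ).eq_zero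

lemma isUnit_two (φ : R →+* K) (hK : ringChar K ≠ 2) : IsUnit (2 : R) := by
  rw [isUnit_iff_map_ne_zero φ, map_ofNat]
  exact Ring.two_ne_zero hK

lemma isNilpotent_iff_map_eq_zero (φ : R →+* K) {x : R} : IsNilpotent x ↔ φ x = 0 := by
  rw [Ring.KrullDimLE.isNilpotent_iff_mem_nonunits, mem_nonunits_iff, isUnit_iff_map_ne_zero φ,
    not_not]

lemma bijOn_map_setOf_sq_eq {φ : R →+* K} (hφ : Function.Surjective φ) (h2 : IsUnit (2 : R))
    {z : R} (hz : IsUnit z) : Set.BijOn φ {s | s ^ 2 = z} {r | r ^ 2 = φ z} := by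
  have existsUnique_lift {x : R} (hx : φ x ^ 2 = φ z) :
      ∃! r : R, IsNilpotent (x - r) ∧ r ^ 2 = z := by
    refine existsUnique_sq_eq_of_isNilpotent_sub (h2.mul ?_) ?_
    · rw [isUnit_iff_map_ne_zero φ, ← pow_ne_zero_iff two_ne_zero, hx]
      exact (hz.map φ).ne_zero
    · rw [isNilpotent_iff_map_eq_zero φ, map_sub, map_pow, hx, sub_self]
  have isNilpotent_sub_iff (x r : R) : IsNilpotent (x - r) ↔ φ r = φ x := by
    rw [isNilpotent_iff_map_eq_zero φ, map_sub, sub_eq_zero, eq_comm]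
  refine ⟨fun s (hs : s ^ 2 = z) ↦ ?_, fun s (hs : s ^ 2 = z) s' (hs' : s' ^ 2 = z) h ↦ ?_,
    fun r (hr : r ^ 2 = φ z) ↦ ?_⟩
  · rw [Set.mem_ofPred_eq, ← hs, map_pow]
  · refine (existsUnique_lift (x := s) (by rw [← hs, map_pow])).unique ⟨?_, hs⟩ ⟨?_, hs'⟩
    · simp
    · rw [isNilpotent_sub_iff, h]
  · obtain ⟨x, rfl⟩ := hφ r
    obtain ⟨s, ⟨hxs, hs⟩, -⟩ := existsUnique_lift hr
    exact ⟨s, hs, (isNilpotent_sub_iff x s).1 hxs⟩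

lemma exists_sq_add_sq_eq_neg_one [Finite K] {φ : R →+* K} (hφ : Function.Surjective φ)
    (hK : ringChar K ≠ 2) : ∃ α β : R, α ^ 2 + β ^ 2 = -1 := by
  have := NeZero.mk (CharP.ringChar_ne_zero_of_finite K)
  obtain ⟨a, b, hab⟩ := CharP.sq_add_sq K (ringChar K) (-1)
  rw [Int.cast_neg, Int.cast_one] at hab
  wlog ha : (a : K) ≠ 0 generalizing a b
  · refine this b a (by rw [← hab, add_comm]) fun hb ↦ ?_
    simp [not_not.1 ha, hb] at hab
  have map_eq : φ (-1 - b ^ 2) = a ^ 2 := by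
    rw [map_sub, map_neg, map_one, map_pow, map_natCast, ← hab, add_sub_cancel_right]
  have isUnit_sub : IsUnit (-1 - b ^ 2 : R) := by
    rw [isUnit_iff_map_ne_zero φ, map_eq]
    exact pow_ne_zero 2 ha
  obtain ⟨α, hα, -⟩ := (bijOn_map_setOf_sq_eq hφ (isUnit_two φ hK) isUnit_sub).surjOn map_eq.symm
  exact ⟨α, b, eq_sub_iff_add_eq.1 hα⟩

end SquareRoots

section Determinant

variable {R : Type*} [CommRing R] [IsLocalRing R] [Finite R]

lemma ncard_setOf_det_eq {m : R} (hm : IsUnit m) :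
    {A : Matrix (Fin 2) (Fin 2) R | A.det = m}.ncard =
      Nat.card R * Nat.card Rˣ * (Nat.card R + (nonunits R).ncard) := by
  let D : Set (Matrix (Fin 2) (Fin 2) R) := {A | A.det = m}
  let U : Set (Matrix (Fin 2) (Fin 2) R) := {A | IsUnit (A 0 0)}
  have ncard_isUnit : (D ∩ U).ncard = Nat.card R * Nat.card R * Nat.card Rˣ := by
    let e : Matrix (Fin 2) (Fin 2) R ≃ (R × R) × R × R :=
      { toFun A := ((A 0 1, A 1 0), A 0 0, A 1 1)
        invFun x := !![x.2.1, x.1.1; x.1.2, x.2.2]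
        left_inv A := (eta_fin_two A).symm
        right_inv _ := rfl }
    rw [← Nat.card_prod, ← Set.ncard_univ, ← ncard_setOf_mul_eq_and_isUnit _ fun x ↦ m + x.1 * x.2,
      ← ncard_preimage_equiv e]
    congr 1 with A
    change A.det = m ∧ IsUnit (A 0 0) ↔
      True ∧ A 0 0 * A 1 1 = m + A 0 1 * A 1 0 ∧ IsUnit (A 0 0)
    rw [det_fin_two, sub_eq_iff_eq_add, true_and]
  have ncard_not_isUnit : (D \ U).ncard = (nonunits R).ncard * Nat.card R * Nat.card Rˣ := by
    let e : Matrix (Fin 2) (Fin 2) R ≃ (R × R) × R × R :=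
      { toFun A := ((A 0 0, A 1 1), A 0 1, A 1 0)
        invFun x := !![x.1.1, x.2.1; x.2.2, x.1.2]
        left_inv A := (eta_fin_two A).symm
        right_inv _ := rfl }
    rw [← Set.ncard_univ, ← Set.ncard_prod,
      ← ncard_setOf_mul_eq_and_isUnit _ fun x ↦ x.1 * x.2 - m, ← ncard_preimage_equiv e]
    congr 1 with A
    change A.det = m ∧ ¬IsUnit (A 0 0) ↔
      (¬IsUnit (A 0 0) ∧ True) ∧ A 0 1 * A 1 0 = A 0 0 * A 1 1 - m ∧ IsUnit (A 0 1)
    have isUnit_of_det (hA : A.det = m) (h00 : ¬IsUnit (A 0 0)) : IsUnit (A 0 1) := by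
      rw [← hA, det_fin_two, sub_eq_add_neg] at hm
      refine (IsLocalRing.isUnit_or_isUnit_of_isUnit_add hm).elim (fun h ↦ ?_) fun h ↦ ?_
      · exact absurd (isUnit_of_mul_isUnit_left h) h00
      · exact isUnit_of_mul_isUnit_left ((IsUnit.neg_iff _).1 h)
    grind [det_fin_two]
  rw [← Set.ncard_inter_add_ncard_sdiff_eq_ncard D U, ncard_isUnit, ncard_not_isUnit]
  ring

end Determinant

section Quadric

variable {R : Type*} [CommRing R]

/-- The affine quadric `u * v = s ^ 2 + e`, as the set of triples `(s, u, v)`. It parametrizes the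
trace-zero `2 × 2` matrices of determinant `e`. -/
def quadric (e : R) : Set (R × R × R) := {x | x.2.1 * x.2.2 = x.1 ^ 2 + e}

lemma ncard_quadric_inter_isUnit (e : R) :
    (quadric e ∩ {x | IsUnit x.2.1}).ncard = Nat.card R * Nat.card Rˣ := by
  rw [← Set.ncard_univ, ← ncard_setOf_mul_eq_and_isUnit _ fun s : R ↦ s ^ 2 + e]
  congr 1 with x
  exact (true_and _).symm.to_iff

lemma ncard_setOf_trace_eq_zero_and_det_eq (e : R) :
    {A : Matrix (Fin 2) (Fin 2) R | A.trace = 0 ∧ A.det = e}.ncard = (quadric e).ncard := by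
  refine Set.BijOn.ncard_eq (f := fun A ↦ (A 0 0, -A 0 1, A 1 0)) ⟨?_, ?_, ?_⟩
  · rintro A ⟨htr, rfl⟩
    rw [trace_fin_two, add_eq_zero_iff_neg_eq] at htr
    change -A 0 1 * A 1 0 = A 0 0 ^ 2 + A.det
    rw [det_fin_two, ← htr]
    ring
  · rintro A ⟨hA, -⟩ B ⟨hB, -⟩ h
    rw [trace_fin_two] at hA hB
    ext i j
    fin_cases i <;> fin_cases j <;> grind
  · rintro ⟨s, u, v⟩ (hx : u * v = s ^ 2 + e)
    refine ⟨!![s, -u; v, -s], ⟨?_, ?_⟩, ?_⟩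
    · rw [trace_fin_two_of, add_neg_cancel]
    · rw [det_fin_two_of]
      linear_combination hx
    · simp

variable [IsLocalRing R]

lemma isUnit_iff_of_mem_quadric {e : R} (he : e ∈ nonunits R) {x : R × R × R}
    (hx : x ∈ quadric e) : IsUnit x.1 ↔ IsUnit x.2.1 ∧ IsUnit x.2.2 := by
  have isUnit_sq_add_iff (s : R) : IsUnit (s ^ 2 + e) ↔ IsUnit s := by
    simp only [← IsLocalRing.residue_ne_zero_iff_isUnit, map_add, map_pow,
      (IsLocalRing.residue_eq_zero_iff e).2 he, add_zero, pow_ne_zero_iff two_ne_zero]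
  rw [← isUnit_sq_add_iff, ← hx, IsUnit.mul_iff]

lemma quadric_sdiff_primitive {e : R} (he : e ∈ nonunits R) :
    quadric e \ {x | IsUnit x.2.1 ∨ IsUnit x.2.2} =
      quadric e ∩ nonunits R ×ˢ nonunits R ×ˢ nonunits R := by
  ext x
  refine and_congr_right fun hx ↦ ?_
  change ¬(IsUnit x.2.1 ∨ IsUnit x.2.2) ↔ ¬IsUnit x.1 ∧ ¬IsUnit x.2.1 ∧ ¬IsUnit x.2.2
  have := isUnit_iff_of_mem_quadric he hx
  tauto

variable [Finite R]

lemma ncard_quadric_of_isUnit {K : Type*} [Field K] [Fintype K] [DecidableEq K] {φ : R →+* K}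
    (hφ : Function.Surjective φ) (hK : ringChar K ≠ 2) {e : R} (he : IsUnit e) :
    ((quadric e).ncard : ℤ) = Nat.card R * Nat.card Rˣ +
      (nonunits R).ncard * Nat.card R * (1 + quadraticChar K (φ (-e))) := by
  have mem_quadric_iff (s u v : R) : (s, u, v) ∈ quadric e ↔ s ^ 2 = u * v - e := by
    rw [eq_sub_iff_add_eq, eq_comm]; rfl
  have sqrt_bijOn {u v : R} (hu : u ∈ nonunits R) :
      Set.BijOn φ {s | s ^ 2 = u * v - e} {r | r ^ 2 = φ (-e)} := by
    have map_u : φ u = 0 := by rwa [mem_nonunits_iff, isUnit_iff_map_ne_zero φ, not_not] at hu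
    have map_eq : φ (u * v - e) = φ (-e) := by rw [map_sub, map_mul, map_u, zero_mul, map_neg,
      zero_sub]
    rw [← map_eq]
    refine bijOn_map_setOf_sq_eq hφ (isUnit_two φ hK) ?_
    rw [isUnit_iff_map_ne_zero φ, map_eq]
    exact (he.neg.map φ).ne_zero
  have ncard_not_isUnit : (quadric e \ {x | IsUnit x.2.1}).ncard =
      {r : K | r ^ 2 = φ (-e)}.ncard * ((nonunits R).ncard * Nat.card R) := by
    rw [← Set.ncard_univ R, ← Set.ncard_prod, ← Set.ncard_prod]
    refine Set.BijOn.ncard_eq (f := fun x ↦ (φ x.1, x.2)) ⟨?_, ?_, ?_⟩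
    · rintro ⟨s, u, v⟩ ⟨hx, hu⟩
      exact ⟨(sqrt_bijOn hu).mapsTo ((mem_quadric_iff s u v).1 hx), hu, trivial⟩
    · rintro ⟨s, u, v⟩ ⟨hx, hu⟩ ⟨s', u', v'⟩ ⟨hx', -⟩ h
      obtain ⟨hs, huv⟩ := Prod.mk.inj h
      obtain ⟨rfl, rfl⟩ := Prod.mk.inj huv
      rw [(sqrt_bijOn hu).injOn ((mem_quadric_iff s u v).1 hx) ((mem_quadric_iff s' u v).1 hx') hs]
    · rintro ⟨r, u, v⟩ ⟨hr, hu, -⟩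
      obtain ⟨s, hs, rfl⟩ := (sqrt_bijOn (v := v) hu).surjOn hr
      exact ⟨(s, u, v), ⟨(mem_quadric_iff s u v).2 hs, hu⟩, rfl⟩
  have ncard_sqrt : ({r : K | r ^ 2 = φ (-e)}.ncard : ℤ) = quadraticChar K (φ (-e)) + 1 := by
    rw [← quadraticChar_card_sqrts hK, Set.ncard_eq_toFinset_card']
  rw [← Set.ncard_inter_add_ncard_sdiff_eq_ncard (quadric e) {x | IsUnit x.2.1},
    ncard_quadric_inter_isUnit, ncard_not_isUnit]
  push_cast
  rw [ncard_sqrt]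
  ring

lemma ncard_quadric_inter_primitive {e : R} (he : e ∈ nonunits R) :
    (quadric e ∩ {x | IsUnit x.2.1 ∨ IsUnit x.2.2}).ncard =
      Nat.card Rˣ * (Nat.card R + (nonunits R).ncard) := by
  have ncard_not_isUnit : ((quadric e ∩ {x | IsUnit x.2.1 ∨ IsUnit x.2.2}) \
      {x | IsUnit x.2.1}).ncard = (nonunits R).ncard * Nat.card Rˣ := by
    let swap : R × R × R ≃ R × R × R := (Equiv.refl R).prodCongr (Equiv.prodComm R R)
    rw [← ncard_setOf_mul_eq_and_isUnit _ fun s : R ↦ s ^ 2 + e, ← ncard_preimage_equiv swap]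
    congr 1 with ⟨s, u, v⟩
    change (v * u = s ^ 2 + e ∧ (IsUnit v ∨ IsUnit u)) ∧ ¬IsUnit v ↔
      ¬IsUnit s ∧ u * v = s ^ 2 + e ∧ IsUnit u
    have := isUnit_iff_of_mem_quadric (x := (s, v, u)) he
    change (v * u = s ^ 2 + e → (IsUnit s ↔ IsUnit v ∧ IsUnit u)) at this
    rw [mul_comm u v]
    tauto
  have inter_isUnit : quadric e ∩ {x | IsUnit x.2.1 ∨ IsUnit x.2.2} ∩ {x | IsUnit x.2.1} =
      quadric e ∩ {x | IsUnit x.2.1} := by grind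
  rw [← Set.ncard_inter_add_ncard_sdiff_eq_ncard _ {x : R × R × R | IsUnit x.2.1}, inter_isUnit,
    ncard_quadric_inter_isUnit, ncard_not_isUnit]
  ring

end Quadric

section Quaternion

open scoped Quaternion

variable {R : Type*} [CommRing R]

lemma mul_transpose_eq_iff {m d : R} (X : Matrix (Fin 2) (Fin 4) R) :
    X * Xᵀ = !![m, 0; 0, d] ↔ X 0 ⬝ᵥ X 0 = m ∧ X 0 ⬝ᵥ X 1 = 0 ∧ X 1 ⬝ᵥ X 1 = d := by
  have mul_transpose_apply (i j : Fin 2) : (X * Xᵀ) i j = X i ⬝ᵥ X j := rfl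
  simp only [← Matrix.ext_iff, Fin.forall_fin_two, mul_transpose_apply, of_apply, cons_val_zero,
    cons_val_one, dotProduct_comm (X 1) (X 0)]
  tauto

lemma equivTuple_dotProduct_equivTuple (x y : ℍ[R]) :
    Quaternion.equivTuple R x ⬝ᵥ Quaternion.equivTuple R y = (star x * y).re := by
  simp [dotProduct, Fin.sum_univ_four]

lemma ncard_setOf_normSq_eq_and_re_star_mul_eq_zero {m d : R} (hm : IsUnit m) :
    {x : ℍ[R] × ℍ[R] | Quaternion.normSq x.1 = m ∧ (star x.1 * x.2).re = 0 ∧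
        Quaternion.normSq x.2 = d}.ncard =
      {x : ℍ[R] | Quaternion.normSq x = m}.ncard *
        {w : ℍ[R] | w.re = 0 ∧ Quaternion.normSq w = m * d}.ncard := by
  obtain ⟨m, rfl⟩ := hm
  rw [← Set.ncard_prod]
  -- For `x` of norm `m`, the map `y ↦ x̄ y` is inverted by `w ↦ m⁻¹ x w`.
  refine Set.BijOn.ncard_eq (f := fun x ↦ (x.1, star x.1 * x.2)) ⟨?_, ?_, ?_⟩
  · rintro ⟨x, y⟩ ⟨hx, hxy, rfl⟩
    exact ⟨hx, hxy, by rw [map_mul, Quaternion.normSq_star, hx]⟩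
  · rintro ⟨x, y⟩ ⟨hx, -⟩ ⟨x', y'⟩ - h
    obtain ⟨rfl, h⟩ := Prod.mk.inj h
    have mul_star_mul (z : ℍ[R]) : x * (star x * z) = m • z := by
      rw [← mul_assoc, Quaternion.self_mul_star, hx, Quaternion.coe_mul_eq_smul, Units.smul_def]
    have hy : y = y' := MulAction.injective m <| by
      simp only [← mul_star_mul]
      exact congrArg (x * ·) h
    rw [hy]
  · rintro ⟨x, w⟩ ⟨hx, hw, hN⟩
    have star_mul : star x * m⁻¹ • (x * w) = w := by
      rw [mul_smul_comm, ← mul_assoc, Quaternion.star_mul_self, hx, Quaternion.coe_mul_eq_smul,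
        ← Units.smul_def, inv_smul_smul]
    have normSq_eq : Quaternion.normSq (m⁻¹ • (x * w)) = d := by
      rw [Units.smul_def, Quaternion.normSq_smul, map_mul, hx, hN, sq, mul_assoc,
        m.inv_mul_cancel_left, m.inv_mul_cancel_left]
    exact ⟨(x, m⁻¹ • (x * w)), ⟨hx, by rwa [star_mul], normSq_eq⟩, Prod.ext rfl star_mul⟩

lemma card_mul_transpose_eq {m d : R} (hm : IsUnit m) :
    Nat.card {X : Matrix (Fin 2) (Fin 4) R // X * Xᵀ = !![m, 0; 0, d]} =
      {x : ℍ[R] | Quaternion.normSq x = m}.ncard *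
        {w : ℍ[R] | w.re = 0 ∧ Quaternion.normSq w = m * d}.ncard := by
  let rows : Matrix (Fin 2) (Fin 4) R ≃ ℍ[R] × ℍ[R] :=
    (finTwoArrowEquiv (Fin 4 → R)).trans
      ((Quaternion.equivTuple R).symm.prodCongr (Quaternion.equivTuple R).symm)
  have dotProduct_eq (u v : Fin 4 → R) : u ⬝ᵥ v =
      (star ((Quaternion.equivTuple R).symm u) * (Quaternion.equivTuple R).symm v).re := by
    rw [← equivTuple_dotProduct_equivTuple, Equiv.apply_symm_apply, Equiv.apply_symm_apply]
  have re_star_mul_self (x : ℍ[R]) : (star x * x).re = Quaternion.normSq x := by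
    rw [Quaternion.star_mul_self, Quaternion.re_coe]
  rw [← ncard_setOf_normSq_eq_and_re_star_mul_eq_zero hm, ← ncard_preimage_equiv rows,
    ← Nat.card_coe_set_eq]
  refine Nat.card_congr (Equiv.subtypeEquivRight fun X ↦ ?_)
  rw [mul_transpose_eq_iff, dotProduct_eq, dotProduct_eq, dotProduct_eq, re_star_mul_self,
    re_star_mul_self]
  rfl

/-- The splitting of the quaternion algebra given by a representation `α ^ 2 + β ^ 2 = -1`, as a
bijection only: its linearity is clear from the formula, and counting uses just that it carries the
norm to the determinant and twice the real part to the trace. It sends `i`, `j`, `k` to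
`!![α, β; β, -α]`, `!![0, -1; 1, 0]` and `!![β, -α; -α, -β]`. -/
@[simps apply]
def quaternionEquivMatrix [Invertible (2 : R)] {α β : R} (h : α ^ 2 + β ^ 2 = -1) :
    ℍ[R] ≃ Matrix (Fin 2) (Fin 2) R where
  toFun x := !![x.re + α * x.imI + β * x.imK, β * x.imI - x.imJ - α * x.imK;
    β * x.imI + x.imJ - α * x.imK, x.re - α * x.imI - β * x.imK]
  invFun A := ⟨⅟2 * (A 0 0 + A 1 1), -⅟2 * (α * (A 0 0 - A 1 1) + β * (A 0 1 + A 1 0)),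
    ⅟2 * (A 1 0 - A 0 1), -⅟2 * (β * (A 0 0 - A 1 1) - α * (A 0 1 + A 1 0))⟩
  left_inv x := by
    have h2 : (⅟2 : R) * 2 = 1 := invOf_mul_self' 2
    ext <;> simp <;> grind
  right_inv A := by
    have h2 : (⅟2 : R) * 2 = 1 := invOf_mul_self' 2
    ext i j; fin_cases i <;> fin_cases j <;> simp <;> grind

section

variable [Invertible (2 : R)] {α β : R} (h : α ^ 2 + β ^ 2 = -1)
include h

lemma det_quaternionEquivMatrix (x : ℍ[R]) :
    (quaternionEquivMatrix h x).det = Quaternion.normSq x := by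
  rw [quaternionEquivMatrix_apply, det_fin_two_of, Quaternion.normSq_def']
  grind

lemma trace_quaternionEquivMatrix (x : ℍ[R]) :
    (quaternionEquivMatrix h x).trace = 2 * x.re := by
  rw [quaternionEquivMatrix_apply, trace_fin_two_of]
  ring

lemma ncard_setOf_normSq_eq (m : R) :
    {x : ℍ[R] | Quaternion.normSq x = m}.ncard =
      {A : Matrix (Fin 2) (Fin 2) R | A.det = m}.ncard := by
  rw [← ncard_preimage_equiv (quaternionEquivMatrix h)]
  simp only [Set.preimage_ofPred_eq, det_quaternionEquivMatrix]

lemma ncard_setOf_re_eq_zero_and_normSq_eq (e : R) :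
    {w : ℍ[R] | w.re = 0 ∧ Quaternion.normSq w = e}.ncard = (quadric e).ncard := by
  have re_eq_zero_iff (w : ℍ[R]) : w.re = 0 ↔ (quaternionEquivMatrix h w).trace = 0 := by
    rw [trace_quaternionEquivMatrix, (isUnit_of_invertible (2 : R)).mul_right_eq_zero]
  rw [← ncard_setOf_trace_eq_zero_and_det_eq, ← ncard_preimage_equiv (quaternionEquivMatrix h)]
  simp only [Set.preimage_ofPred_eq, re_eq_zero_iff, det_quaternionEquivMatrix]

end

lemma card_mul_transpose_eq_mul_ncard_quadric [IsLocalRing R] [Finite R] {K : Type*} [Field K]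
    [Finite K] {φ : R →+* K} (hφ : Function.Surjective φ) (hK : ringChar K ≠ 2) {m : R}
    (hm : IsUnit m) (d : R) :
    Nat.card {X : Matrix (Fin 2) (Fin 4) R // X * Xᵀ = !![m, 0; 0, d]} =
      Nat.card R * Nat.card Rˣ * (Nat.card R + (nonunits R).ncard) *
        (quadric (m * d)).ncard := by
  obtain ⟨α, β, hαβ⟩ := exists_sq_add_sq_eq_neg_one hφ hK
  have := (isUnit_two φ hK).invertible
  rw [card_mul_transpose_eq hm, ncard_setOf_normSq_eq hαβ, ncard_setOf_det_eq hm,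
    ncard_setOf_re_eq_zero_and_normSq_eq hαβ]

end Quaternion

section ZModPrimePow

variable {p : ℕ} [Fact p.Prime] (t : ℕ)

instance isLocalRing_zmod_prime_pow_succ : IsLocalRing (ZMod (p ^ (t + 1))) :=
  have : Fact (1 < p ^ (t + 1)) := ⟨Nat.one_lt_pow t.succ_ne_zero (Fact.out : p.Prime).one_lt⟩
  IsLocalRing.of_surjective' (PadicInt.toZModPow (t + 1)) (ZMod.ringHom_surjective _)

/-- Reduction modulo `p`, the residue map of the local ring `ℤ/p^(t+1)ℤ`. The exponent is
a successor so that the ring is nontrivial. -/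
def residueMap : ZMod (p ^ (t + 1)) →+* ZMod p :=
  ZMod.castHom (dvd_pow_self p t.succ_ne_zero) (ZMod p)

lemma residueMap_surjective : Function.Surjective (residueMap (p := p) t) :=
  ZMod.ringHom_surjective _

lemma isUnit_intCast_iff (z : ℤ) : IsUnit (z : ZMod (p ^ (t + 1))) ↔ ¬(p : ℤ) ∣ z := by
  rw [isUnit_iff_map_ne_zero (residueMap t), map_intCast, ne_eq, ZMod.intCast_zmod_eq_zero_iff_dvd]

lemma ncard_nonunits_zmod : (nonunits (ZMod (p ^ (t + 1)))).ncard = p ^ t := by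
  have nonunits_eq :
      nonunits (ZMod (p ^ (t + 1))) = (residueMap t).toAddMonoidHom ⁻¹' {0} := by
    ext x
    exact not_iff_comm.1 (isUnit_iff_map_ne_zero (residueMap t)).symm
  have hcard := ncard_preimage_mul_card_of_surjective (residueMap (p := p) t).toAddMonoidHom
    (residueMap_surjective t) {0}
  rw [← nonunits_eq, Set.ncard_singleton, mul_one, Nat.card_zmod, Nat.card_zmod, pow_succ] at hcard
  exact Nat.eq_of_mul_eq_mul_right (Fact.out : p.Prime).pos hcard

lemma card_units_zmod : (Nat.card (ZMod (p ^ (t + 1)))ˣ : ℤ) = p ^ t * (p - 1) := by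
  have hp : p.Prime := Fact.out
  rw [Nat.card_eq_fintype_card, ZMod.card_units_eq_totient, Nat.totient_prime_pow_succ hp,
    Nat.cast_mul, Nat.cast_pow, Nat.cast_pred hp.pos]

lemma range_mulLeft_prime :
    Set.range (AddMonoidHom.mulLeft (p : ZMod (p ^ (t + 1)))) = nonunits _ := by
  ext x
  obtain ⟨z, rfl⟩ := ZMod.intCast_surjective x
  rw [mem_nonunits_iff, isUnit_intCast_iff, not_not]
  constructor
  · rintro ⟨y, hy⟩
    apply_fun residueMap t at hy
    rw [AddMonoidHom.coe_mulLeft, map_mul, map_natCast, map_intCast, CharP.cast_eq_zero,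
      zero_mul] at hy
    exact (ZMod.intCast_zmod_eq_zero_iff_dvd z p).1 hy.symm
  · rintro ⟨y, rfl⟩
    exact ⟨y, by simp⟩

lemma sq_prime_mul_intCast_eq_zero_iff (z : ℤ) :
    (p ^ 2 * z : ZMod (p ^ (t + 2))) = 0 ↔ (z : ZMod (p ^ t)) = 0 := by
  have hp2 : (p : ℤ) ^ 2 ≠ 0 := pow_ne_zero 2 (Nat.cast_ne_zero.2 (Fact.out : p.Prime).ne_zero)
  have := ZMod.intCast_zmod_eq_zero_iff_dvd (p ^ 2 * z) (p ^ (t + 2))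
  push_cast at this
  rw [this, ZMod.intCast_zmod_eq_zero_iff_dvd, Nat.cast_pow, add_comm, pow_add,
    mul_dvd_mul_iff_left hp2]

lemma mapTriple_mulLeft_preimage_quadric (e : ℤ) :
    mapTriple (AddMonoidHom.mulLeft (p : ZMod (p ^ (t + 2)))) ⁻¹'
        quadric (p ^ 2 * e : ZMod (p ^ (t + 2))) =
      mapTriple (ZMod.castHom (pow_dvd_pow p (t.le_add_right 2)) (ZMod (p ^ t))).toAddMonoidHom ⁻¹'
        quadric (e : ZMod (p ^ t)) := by
  ext ⟨s, u, v⟩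
  obtain ⟨s, rfl⟩ := ZMod.intCast_surjective s
  obtain ⟨u, rfl⟩ := ZMod.intCast_surjective u
  obtain ⟨v, rfl⟩ := ZMod.intCast_surjective v
  let π := ZMod.castHom (pow_dvd_pow p (t.le_add_right 2)) (ZMod (p ^ t))
  change (p * u : ZMod (p ^ (t + 2))) * (p * v) = (p * s) ^ 2 + p ^ 2 * e ↔
    π u * π v = π s ^ 2 + e
  have h := sq_prime_mul_intCast_eq_zero_iff (p := p) t (u * v - (s ^ 2 + e))
  push_cast at h
  rw [map_intCast, map_intCast, map_intCast, ← sub_eq_zero,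
    ← sub_eq_zero (b := (s ^ 2 + e : ZMod (p ^ t))), ← h]
  ring_nf

lemma sq_prime_mul_mem_nonunits (e : ℤ) : (p ^ 2 * e : ZMod (p ^ (t + 2))) ∈ nonunits _ := by
  have h := isUnit_intCast_iff (p := p) (t + 1) (p ^ 2 * e)
  push_cast at h
  rw [mem_nonunits_iff, h, not_not]
  exact (dvd_pow_self _ two_ne_zero).mul_right e

lemma ncard_quadric_sdiff_primitive (e : ℤ) :
    (quadric (p ^ 2 * e : ZMod (p ^ (t + 2))) \ {x | IsUnit x.2.1 ∨ IsUnit x.2.2}).ncard =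
      p ^ 3 * (quadric (e : ZMod (p ^ t))).ncard := by
  let f := mapTriple (AddMonoidHom.mulLeft (p : ZMod (p ^ (t + 2))))
  let π := mapTriple
    (ZMod.castHom (pow_dvd_pow p (t.le_add_right 2)) (ZMod (p ^ t))).toAddMonoidHom
  have range_f : Set.range f = nonunits _ ×ˢ nonunits _ ×ˢ nonunits _ := by
    rw [range_mapTriple, range_mulLeft_prime]
  have ncard_range : (Set.range f).ncard = p ^ (3 * (t + 1)) := by
    rw [range_f, Set.ncard_prod, Set.ncard_prod, ncard_nonunits_zmod]
    ring
  have π_surjective : Function.Surjective π := by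
    have h := ZMod.ringHom_surjective
      (ZMod.castHom (pow_dvd_pow p (t.le_add_right 2)) (ZMod (p ^ t)))
    exact h.prodMap (h.prodMap h)
  have preimage_f := ncard_preimage_mul_ncard_range f (quadric (p ^ 2 * e))
  have preimage_π :=
    ncard_preimage_mul_card_of_surjective π π_surjective (quadric (e : ZMod (p ^ t)))
  rw [quadric_sdiff_primitive (sq_prime_mul_mem_nonunits t e), ← range_f]
  rw [ncard_range, mapTriple_mulLeft_preimage_quadric] at preimage_f
  simp only [Nat.card_prod, Nat.card_zmod] at preimage_f preimage_π
  have p_pos : 0 < p := (Fact.out : p.Prime).pos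
  refine Nat.eq_of_mul_eq_mul_left (pow_pos p_pos (6 * t + 6)) ?_
  linear_combination p ^ (3 * t + 3) * preimage_π - p ^ (3 * t) * preimage_f

lemma ncard_quadric_sq_prime_mul (e : ℤ) :
    ((quadric (p ^ 2 * e : ZMod (p ^ (t + 2)))).ncard : ℤ) =
      p ^ (2 * t + 4) - p ^ (2 * t + 2) + p ^ 3 * (quadric (e : ZMod (p ^ t))).ncard := by
  rw [← Set.ncard_inter_add_ncard_sdiff_eq_ncard _ {x | IsUnit x.2.1 ∨ IsUnit x.2.2},
    ncard_quadric_sdiff_primitive,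
    ncard_quadric_inter_primitive (sq_prime_mul_mem_nonunits t e), Nat.card_zmod,
    ncard_nonunits_zmod]
  push_cast
  rw [card_units_zmod]
  ring

lemma ncard_quadric_prime_pow_mul (hp : p ≠ 2) {e : ℤ} (he : ¬(p : ℤ) ∣ e) {c t : ℕ}
    (hct : 2 * c < t) :
    ((quadric (p ^ (2 * c) * e : ZMod (p ^ t))).ncard : ℤ) * p ^ (c + 1) =
      p ^ (2 * t) * ((p + 1) * p ^ c + legendreSym p (-e) - 1) := by
  induction c generalizing t with
  | zero =>
    obtain ⟨t, rfl⟩ := Nat.exists_eq_add_of_le' (show 1 ≤ t from hct)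
    have ncard_eq := ncard_quadric_of_isUnit (residueMap_surjective t)
      (by rwa [ZMod.ringChar_zmod_n]) ((isUnit_intCast_iff t e).2 he)
    rw [ncard_nonunits_zmod, card_units_zmod, Nat.card_zmod, ← Int.cast_neg, map_intCast,
      ← legendreSym] at ncard_eq
    rw [mul_zero, pow_zero, one_mul, ncard_eq]
    push_cast
    ring
  | succ c ih =>
    obtain ⟨t, rfl⟩ := Nat.exists_eq_add_of_le' (show 2 ≤ t by omega)
    have pow_mul_eq : (p ^ (2 * (c + 1)) * e : ZMod (p ^ (t + 2))) =
        p ^ 2 * (p ^ (2 * c) * e : ℤ) := by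
      push_cast
      ring
    rw [pow_mul_eq, ncard_quadric_sq_prime_mul]
    push_cast
    linear_combination p ^ 4 * ih (t := t) (by omega)

end ZModPrimePow

lemma eq_zero_of_add_two_eq_of_sub_two_eq {p : ℕ} [Fact p.Prime] (hp : p ≠ 2) {n m k : ℤ}
    {a b : ℕ} (hm : n + 2 = m * p ^ a) (hk : n - 2 = k * p ^ b) (hab : a ≤ b) : a = 0 := by
  by_contra ha
  have p_dvd_add : (p : ℤ) ∣ n + 2 := hm ▸ (dvd_pow_self _ ha).mul_left m
  have p_dvd_sub : (p : ℤ) ∣ n - 2 := hk ▸ (dvd_pow_self _ (by omega)).mul_left k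
  have p_dvd_four : (p : ℤ) ∣ 2 ^ 2 := by
    rw [show (2 ^ 2 : ℤ) = n + 2 - (n - 2) by ring]
    exact dvd_sub p_dvd_add p_dvd_sub
  have p_prime : p.Prime := Fact.out
  refine hp ((Nat.prime_dvd_prime_iff_eq p_prime Nat.prime_two).1 ?_)
  exact p_prime.dvd_of_dvd_pow (by exact_mod_cast p_dvd_four)

end LocalDensity

open LocalDensity in
theorem local_density_ramified_even_general {p : ℕ} [Fact p.Prime] (hp : p ≠ 2) {m k : ℤ}
    (hm : ¬(p : ℤ) ∣ m) (hk : ¬(p : ℤ) ∣ k) {b t : ℕ} (hb : Even b) (hbt : b < t) :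
    (Nat.card {X : Matrix (Fin 2) (Fin 4) (ZMod (p ^ t)) //
        X * Xᵀ = !![(m : ZMod (p ^ t)), 0; 0, (k * p ^ b : ZMod (p ^ t))]} : ℤ) *
        p ^ (3 + b / 2) =
      p ^ (5 * t) * (p + 1) *
        ((p - 1) * (legendreSym p (-(m * k)) - 1) + (p ^ 2 - 1) * p ^ (b / 2)) := by
  obtain ⟨c, rfl⟩ := hb.exists_two_nsmul
  obtain ⟨t, rfl⟩ := Nat.exists_eq_add_of_le' (show 1 ≤ t by omega)
  have hmk : ¬(p : ℤ) ∣ m * k :=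
    (Nat.prime_iff_prime_int.1 (Fact.out : p.Prime)).not_dvd_mul hm hk
  have ncard_quadric := ncard_quadric_prime_pow_mul hp hmk (c := c) (t := t + 1) hbt
  have mul_eq : (m * (k * p ^ (2 • c)) : ZMod (p ^ (t + 1))) = p ^ (2 * c) * (m * k : ℤ) := by
    push_cast [smul_eq_mul]
    ring
  rw [card_mul_transpose_eq_mul_ncard_quadric (residueMap_surjective t)
    (by rwa [ZMod.ringChar_zmod_n]) ((isUnit_intCast_iff t m).2 hm), mul_eq, Nat.card_zmod,
    ncard_nonunits_zmod, smul_eq_mul, Nat.mul_div_cancel_left c two_pos]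
  push_cast at ncard_quadric ⊢
  rw [card_units_zmod]
  linear_combination (p : ℤ) ^ (3 * t + 1) * p ^ 2 * (p ^ 2 - 1) * ncard_quadric

/-- Ramified local density, even case: let `n ≥ 3` be odd, `p ≥ 3` prime with
`p ∣ n² − 4`, write `n + 2 = m p^a`, `n − 2 = k p^b` with `p ∤ mk` and `a ≤ b`.
If `a + b` is even, then for all sufficiently large `t` the number of `2 × 4`
matrices `X` over `ℤ/p^tℤ` with `X Xᵀ = Gₙ = diag(n+2, n−2)` equals
`p^{5t} (p+1) ((p^{a+1} − 1)(χ_p(−mk) − 1) + (a+1)(p² − 1) p^{(a+b)/2}) / p^{3+(a+b)/2}`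
(stated here with the denominator cleared). -/
theorem local_density_ramified_even (n : ℤ) (hodd : Odd n) (hn : 3 ≤ n)
    (p : ℕ) [Fact p.Prime] (hp : 3 ≤ p) (hpn : (p : ℤ) ∣ n ^ 2 - 4)
    (a b : ℕ) (m k : ℤ)
    (hm : n + 2 = m * (p : ℤ) ^ a) (hk : n - 2 = k * (p : ℤ) ^ b)
    (hpm : ¬ (p : ℤ) ∣ m) (hpk : ¬ (p : ℤ) ∣ k)
    (hab : a ≤ b) (hev : Even (a + b)) :
    ∃ T : ℕ, 1 ≤ T ∧ ∀ t : ℕ, T ≤ t →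
      (Nat.card {X : Matrix (Fin 2) (Fin 4) (ZMod (p ^ t)) //
          X * Xᵀ = !![(n : ZMod (p ^ t)) + 2, 0; 0, (n : ZMod (p ^ t)) - 2]} : ℤ)
          * (p : ℤ) ^ (3 + (a + b) / 2)
        = (p : ℤ) ^ (5 * t) * ((p : ℤ) + 1) *
            (((p : ℤ) ^ (a + 1) - 1) * (legendreSym p (-(m * k)) - 1)
              + ((a : ℤ) + 1) * ((p : ℤ) ^ 2 - 1) * (p : ℤ) ^ ((a + b) / 2)) := by
  have hp2 : p ≠ 2 := by omega
  obtain rfl : a = 0 := LocalDensity.eq_zero_of_add_two_eq_of_sub_two_eq hp2 hm hk hab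
  rw [zero_add] at hev
  rw [pow_zero, mul_one] at hm
  refine ⟨b + 1, b.succ_pos, fun t ht ↦ ?_⟩
  have card_eq := local_density_ramified_even_general hp2 hpm hpk hev ht
  have cast_m : (m : ZMod (p ^ t)) = n + 2 := by exact_mod_cast congrArg Int.cast hm.symm
  have cast_k : (k * p ^ b : ZMod (p ^ t)) = n - 2 := by exact_mod_cast congrArg Int.cast hk.symm
  simpa [cast_m, cast_k] using card_eq
end

section
/- Let n ≥ 3 be an odd integer and let p ≥ 3 be a prime dividing n² − 4. Let a be the p-adic valuation of n + 2 and b the p-adic valuation of n − 2, with m = (n + 2)/p^a and k = (n − 2)/p^b (so p ∤ mk), and assume a ≤ b (otherwise exchange the roles of (a, m) and (b, k)). If a + b is odd, then there exists T ≥ 1 such that for every t ≥ T, the number of 2×4 matrices X over ℤ/p^tℤ satisfying X·Xᵀ = G_n (mod p^t) equals p^{5t} · (p + 1)² · ((a + 1)(p − 1) p^{(a+b+1)/2} − (p^{a+1} − 1)) / p^{3 + (a+b+1)/2}. -/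
open Matrix

/-!
Since `p` is odd, `-1 = r² + s²` modulo `p ^ t`, so the quaternion algebra with `i² = j² = -1`
splits and the sum of four squares becomes the determinant of a `2 × 2` matrix. The two rows of `X`
turn into matrices `A`, `B` with `det A = n + 2`, `det B = n - 2` and `tr (adj A * B) = 0`. An odd
prime cannot divide both `n + 2` and `n - 2`, so `a = 0`, `A` is invertible and `B = A * C` with `C`
of trace zero and determinant `w = (n - 2) / (n + 2)`, whose valuation `b` is odd.

Such a `C` is `!![x, y; z, -x]` with `y * z = -w - x²`. If `y` has valuation `j ≤ b`, then `p ^ j`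
divides `x²`, and each such pair `(x, y)` leaves `p ^ j` choices of `z`. If `p ^ (b + 1)` divided
`y`, then `-w = x²` modulo `p ^ (b + 1)`, which is impossible since `b` is odd.
-/

section Fibres

lemma ncard_eq_mul_of_ncard_fiber_eq {α β : Type*} [Finite α] [Finite β] {s : Set α} {t : Set β}
    {c : ℕ} (f : α → β) (hf : Set.MapsTo f s t) (h : ∀ y ∈ t, {x ∈ s | f x = y}.ncard = c) :
    s.ncard = t.ncard * c := by
  classical
  have := Fintype.ofFinite α
  have := Fintype.ofFinite β
  simp only [Set.ncard_eq_toFinset_card']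
  rw [Finset.card_eq_sum_card_fiberwise (f := f) (t := t.toFinset) (by simpa using hf)]
  refine Finset.sum_const_nat fun y hy => ?_
  rw [← h y (Set.mem_toFinset.mp hy), Set.ncard_eq_toFinset_card']
  congr 1
  ext x
  simp

lemma ncard_fiber_mul_card_range {G H : Type*} [AddGroup G] [AddGroup H] (f : G →+ H)
    {y : H} (hy : y ∈ f.range) : {x | f x = y}.ncard * Nat.card f.range = Nat.card G := by
  obtain ⟨x, rfl⟩ := hy
  rw [← AddSubgroup.index_ker, ← f.ker.card_mul_index, ← Nat.card_congr (f.fiberEquivKer x)]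
  rfl

lemma ncard_dotProduct_eq_mul_card {R n : Type*} [CommRing R] [Fintype n]
    {v : n → R} (hv : ∃ i, IsUnit (v i)) (y : R) :
    {w : n → R | v ⬝ᵥ w = y}.ncard * Nat.card R = Nat.card R ^ Fintype.card n := by
  classical
  let f : (n → R) →+ R := AddMonoidHom.mk' (v ⬝ᵥ ·) (dotProduct_add v)
  have hf : Function.Surjective f := fun z => by
    obtain ⟨i, u, hu⟩ := hv
    exact ⟨Pi.single i (↑u⁻¹ * z), by simp [f, dotProduct_single, ← hu]⟩
  have hrange : f.range = ⊤ := AddMonoidHom.range_eq_top.mpr hf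
  have := ncard_fiber_mul_card_range f (y := y) (hrange ▸ AddSubgroup.mem_top y)
  rw [hrange, AddSubgroup.card_top, Nat.card_fun, Nat.card_eq_fintype_card (α := n)] at this
  exact this

lemma ncard_det_eq_of_row {R : Type*} [CommRing R] [Finite R] {x y : R}
    (hxy : IsUnit x ∨ IsUnit y) (u : R) :
    {A : Matrix (Fin 2) (Fin 2) R | A.det = u ∧ (A 0 0, A 0 1) = (x, y)}.ncard = Nat.card R := by
  have hunit : ∃ i, IsUnit ((![-y, x] : Fin 2 → R) i) :=
    hxy.elim (fun hx => ⟨1, hx⟩) fun hy => ⟨0, hy.neg⟩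
  have hinj : Function.Injective fun w : Fin 2 → R => of ![![x, y], w] :=
    fun w w' h => congrFun h 1
  have hdet (w : Fin 2 → R) : (of ![![x, y], w]).det = ![-y, x] ⬝ᵥ w := by
    rw [vec2_dotProduct, det_fin_two]
    simp only [of_apply, cons_val_zero, cons_val_one, cons_val_fin_one]
    ring
  have himage : {A : Matrix (Fin 2) (Fin 2) R | A.det = u ∧ (A 0 0, A 0 1) = (x, y)} =
      (fun w : Fin 2 → R => of ![![x, y], w]) '' {w | ![-y, x] ⬝ᵥ w = u} := by
    ext A
    constructor
    · rintro ⟨hA, hrow⟩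
      obtain ⟨rfl, rfl⟩ := Prod.mk.inj hrow
      have hrows : of ![![A 0 0, A 0 1], A 1] = A := by
        ext i j
        fin_cases i <;> fin_cases j <;> rfl
      exact ⟨A 1, by rw [Set.mem_ofPred_eq, ← hdet, hrows, hA], hrows⟩
    · rintro ⟨w, hw, rfl⟩
      exact ⟨(hdet w).trans hw, rfl⟩
  have hcard := ncard_dotProduct_eq_mul_card hunit u
  rw [Fintype.card_fin, sq] at hcard
  rw [himage, Set.ncard_image_of_injective _ hinj]
  exact Nat.eq_of_mul_eq_mul_right Nat.card_pos hcard

theorem ncard_det_eq_of_isUnit {R : Type*} [CommRing R] [IsLocalRing R] [Finite R] {u : R}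
    (hu : IsUnit u) :
    ({A : Matrix (Fin 2) (Fin 2) R | A.det = u}.ncard : ℤ) =
      Nat.card R * ((Nat.card R : ℤ) ^ 2 - ((nonunits R).ncard : ℤ) ^ 2) := by
  have hmaps : Set.MapsTo (fun A : Matrix (Fin 2) (Fin 2) R => (A 0 0, A 0 1)) {A | A.det = u}
      (nonunits R ×ˢ nonunits R)ᶜ := by
    rintro A rfl ⟨h₀, h₁⟩
    rw [det_fin_two] at hu
    have hm := (IsLocalRing.maximalIdeal R).sub_mem
      (Ideal.mul_mem_right (A 1 1) _ h₀) (Ideal.mul_mem_right (A 1 0) _ h₁)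
    exact hm hu
  have hfiber : ∀ v ∈ (nonunits R ×ˢ nonunits R)ᶜ,
      {A ∈ {A : Matrix (Fin 2) (Fin 2) R | A.det = u} | (A 0 0, A 0 1) = v}.ncard = Nat.card R :=
    fun _ hxy => ncard_det_eq_of_row (or_iff_not_and_not.mpr hxy) u
  have hbase := Set.ncard_compl_add_ncard (nonunits R ×ˢ nonunits R)
  rw [Set.ncard_prod, Nat.card_prod] at hbase
  rw [ncard_eq_mul_of_ncard_fiber_eq _ hmaps hfiber]
  zify at hbase
  push_cast
  linear_combination (Nat.card R : ℤ) * hbase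

end Fibres

section QuadraticSpace

variable {R : Type*} [CommRing R]

/-- The vector `(x₀, x₁, x₂, x₃)` as the element `x₀ + x₁ i + x₂ j + x₃ ij` of the quaternion
algebra with `i² = j² = -1`, split by `i ↦ !![0, 1; -1, 0]` and `j ↦ !![r, s; s, -r]`; the reduced
norm, a sum of four squares, becomes the determinant. -/
@[simps apply]
def quaternionMatrixEquiv {r s : R} (hrs : r ^ 2 + s ^ 2 = -1) [Invertible (2 : R)] :
    (Fin 4 → R) ≃ Matrix (Fin 2) (Fin 2) R where
  toFun x := !![x 0 + (r * x 2 + s * x 3), x 1 + (s * x 2 - r * x 3);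
    -x 1 + (s * x 2 - r * x 3), x 0 - (r * x 2 + s * x 3)]
  invFun A := ![⅟2 * (A 0 0 + A 1 1), ⅟2 * (A 0 1 - A 1 0),
    -⅟2 * (r * (A 0 0 - A 1 1) + s * (A 0 1 + A 1 0)),
    -⅟2 * (s * (A 0 0 - A 1 1) - r * (A 0 1 + A 1 0))]
  left_inv x := by
    have h2 := invOf_mul_self (2 : R)
    ext i
    fin_cases i <;> simp only [Fin.zero_eta, Fin.mk_one, Fin.reduceFinMk, of_apply, cons_val]
    · linear_combination x 0 * h2
    · linear_combination x 1 * h2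
    · linear_combination (-2 * ⅟2) * x 2 * hrs + x 2 * h2
    · linear_combination (-2 * ⅟2) * x 3 * hrs + x 3 * h2
  right_inv A := by
    have h2 := invOf_mul_self (2 : R)
    ext i j
    fin_cases i <;> fin_cases j <;>
      simp only [Fin.zero_eta, Fin.mk_one, of_apply, cons_val]
    · linear_combination A 0 0 * h2 - ⅟2 * (A 0 0 - A 1 1) * hrs
    · linear_combination A 0 1 * h2 - ⅟2 * (A 0 1 + A 1 0) * hrs
    · linear_combination A 1 0 * h2 - ⅟2 * (A 0 1 + A 1 0) * hrs
    · linear_combination A 1 1 * h2 + ⅟2 * (A 0 0 - A 1 1) * hrs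

lemma det_quaternionMatrixEquiv {r s : R} (hrs : r ^ 2 + s ^ 2 = -1) [Invertible (2 : R)]
    (x : Fin 4 → R) :
    (quaternionMatrixEquiv hrs x).det = x ⬝ᵥ x := by
  simp only [quaternionMatrixEquiv_apply, det_fin_two_of, dotProduct, Fin.sum_univ_four]
  linear_combination -(x 2 ^ 2 + x 3 ^ 2) * hrs

lemma trace_adjugate_mul_quaternionMatrixEquiv {r s : R} (hrs : r ^ 2 + s ^ 2 = -1)
    [Invertible (2 : R)] (x y : Fin 4 → R) :
    ((quaternionMatrixEquiv hrs x).adjugate * quaternionMatrixEquiv hrs y).trace =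
      2 * (x ⬝ᵥ y) := by
  simp only [quaternionMatrixEquiv_apply, adjugate_fin_two_of, mul_fin_two, trace_fin_two_of,
    dotProduct, Fin.sum_univ_four]
  linear_combination -2 * (x 2 * y 2 + x 3 * y 3) * hrs

lemma mul_transpose_eq_diagonal_iff {m : Type*} [Fintype m] {X : Matrix (Fin 2) m R} {u v : R} :
    X * Xᵀ = !![u, 0; 0, v] ↔ X 0 ⬝ᵥ X 0 = u ∧ X 0 ⬝ᵥ X 1 = 0 ∧ X 1 ⬝ᵥ X 1 = v := by
  have h (i j : Fin 2) : (X * Xᵀ : Matrix (Fin 2) (Fin 2) R) i j = X i ⬝ᵥ X j := rfl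
  rw [← Matrix.ext_iff]
  simp only [Fin.forall_fin_two, h, of_apply, cons_val', cons_val_zero, cons_val_one,
    cons_val_fin_one, dotProduct_comm (X 1) (X 0)]
  tauto

lemma card_gram_eq_ncard_pairs [Invertible (2 : R)] {r s : R} (hrs : r ^ 2 + s ^ 2 = -1) (u v : R) :
    Nat.card {X : Matrix (Fin 2) (Fin 4) R // X * Xᵀ = !![u, 0; 0, v]} =
      {q : Matrix (Fin 2) (Fin 2) R × Matrix (Fin 2) (Fin 2) R |
        q.1.det = u ∧ (q.1.adjugate * q.2).trace = 0 ∧ q.2.det = v}.ncard := by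
  let e := quaternionMatrixEquiv hrs
  let rows : Matrix (Fin 2) (Fin 4) R ≃ Matrix (Fin 2) (Fin 2) R × Matrix (Fin 2) (Fin 2) R :=
    (finTwoArrowEquiv (Fin 4 → R)).trans (e.prodCongr e)
  refine Nat.card_congr (rows.subtypeEquiv fun X => ?_)
  change X * Xᵀ = _ ↔
    (e (X 0)).det = u ∧ ((e (X 0)).adjugate * e (X 1)).trace = 0 ∧ (e (X 1)).det = v
  rw [mul_transpose_eq_diagonal_iff, det_quaternionMatrixEquiv, det_quaternionMatrixEquiv,
    trace_adjugate_mul_quaternionMatrixEquiv, (isUnit_of_invertible (2 : R)).mul_right_eq_zero]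

/-- The trace-zero matrices of determinant `w`. For `2 × 2` matrices they are the quotients
`A⁻¹ * B` with `A` invertible, `B` orthogonal to `A` for the quadratic form `det`, and
`det B = det A * w`. -/
def tracelessOfDet (n : Type*) [Fintype n] [DecidableEq n] (w : R) : Set (Matrix n n R) :=
  {C | C.trace = 0 ∧ C.det = w}

lemma ncard_pairs_eq_mul {n : Type*} [Fintype n] [DecidableEq n] {u : R} (hu : IsUnit u) (w : R) :
    {q : Matrix n n R × Matrix n n R |
        q.1.det = u ∧ (q.1.adjugate * q.2).trace = 0 ∧ q.2.det = u * w}.ncard =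
      {A : Matrix n n R | A.det = u}.ncard * (tracelessOfDet n w).ncard := by
  have htrace (A C : Matrix n n R) : (A.adjugate * (A * C)).trace = A.det * C.trace := by
    rw [← Matrix.mul_assoc, adjugate_mul, smul_mul, Matrix.one_mul, trace_smul, smul_eq_mul]
  have hinj : Set.InjOn (fun q : Matrix n n R × Matrix n n R => (q.1, q.1 * q.2))
      ({A | A.det = u} ×ˢ tracelessOfDet n w) := by
    rintro ⟨A, C⟩ ⟨hA : A.det = u, -⟩ ⟨A', C'⟩ - h
    obtain ⟨rfl, hC⟩ := Prod.mk.inj h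
    have hA' : IsUnit A := (isUnit_iff_isUnit_det A).mpr (hA ▸ hu)
    exact congrArg (Prod.mk A) (hA'.mul_left_cancel hC)
  rw [← Set.ncard_prod, ← hinj.ncard_image]
  congr 1
  ext ⟨A, B⟩
  constructor
  · rintro ⟨hA : A.det = u, htr : (A.adjugate * B).trace = 0, hB : B.det = u * w⟩
    subst hA
    have hAB : A * (A⁻¹ * B) = B := mul_nonsing_inv_cancel_left A B hu
    rw [← hAB, htrace, hu.mul_right_eq_zero] at htr
    rw [← hAB, det_mul] at hB
    exact ⟨(A, A⁻¹ * B), ⟨rfl, htr, hu.mul_left_cancel hB⟩, congrArg (Prod.mk A) hAB⟩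
  · rintro ⟨⟨A', C⟩, ⟨hA, htr, hC⟩, h⟩
    obtain ⟨rfl, rfl⟩ := Prod.mk.inj h
    change A'.det = u at hA
    exact ⟨hA, by simp [htrace, htr], by simp [det_mul, hA, hC]⟩

end QuadraticSpace

section PrimePower

lemma natCast_dvd_intCast_zmod_iff {N d : ℕ} (hd : d ∣ N) (z : ℤ) :
    (d : ZMod N) ∣ (z : ZMod N) ↔ (d : ℤ) ∣ z := by
  constructor
  · rintro ⟨c, hc⟩
    obtain ⟨c, rfl⟩ := ZMod.intCast_surjective c
    have h : (N : ℤ) ∣ z - d * c := by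
      rw [← ZMod.intCast_zmod_eq_zero_iff_dvd]
      push_cast
      rw [hc, sub_self]
    exact (dvd_sub_left (dvd_mul_right _ c)).mp ((Int.natCast_dvd_natCast.mpr hd).trans h)
  · rintro ⟨c, rfl⟩
    exact ⟨c, by push_cast; rfl⟩

lemma ncard_natCast_dvd_zmod {N d : ℕ} [NeZero N] (hd : d ∣ N) :
    {x : ZMod N | (d : ZMod N) ∣ x}.ncard = N / d := by
  have hset : {x : ZMod N | (d : ZMod N) ∣ x} = AddSubgroup.zmultiples (d : ZMod N) := by
    ext x
    refine ⟨?_, ?_⟩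
    · rintro ⟨c, rfl⟩
      obtain ⟨c, rfl⟩ := ZMod.intCast_surjective c
      exact ⟨c, by simp [mul_comm]⟩
    · rintro ⟨c, rfl⟩
      exact ⟨c, by simp [mul_comm]⟩
  rw [hset, ← Nat.card_coe_set_eq, SetLike.coe_sort_coe, Nat.card_zmultiples,
    ZMod.addOrderOf_coe _ (NeZero.ne N), Nat.gcd_eq_right hd]

variable {p t : ℕ}

lemma pow_dvd_intCast_iff {j : ℕ} (hj : j ≤ t) (z : ℤ) :
    (p : ZMod (p ^ t)) ^ j ∣ (z : ZMod (p ^ t)) ↔ (p : ℤ) ^ j ∣ z :=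
  mod_cast natCast_dvd_intCast_zmod_iff (pow_dvd_pow p hj) z

variable [Fact p.Prime]

lemma ncard_pow_dvd_zmod {j : ℕ} (hj : j ≤ t) :
    {x : ZMod (p ^ t) | (p : ZMod (p ^ t)) ^ j ∣ x}.ncard = p ^ (t - j) := by
  rw [← Nat.pow_div hj (Fact.out : p.Prime).pos]
  exact_mod_cast ncard_natCast_dvd_zmod (pow_dvd_pow p hj)

lemma isUnit_zmod_prime_pow_iff_not_dvd (ht : t ≠ 0) (x : ZMod (p ^ t)) :
    IsUnit x ↔ ¬ (p : ZMod (p ^ t)) ∣ x := by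
  have hp := (Fact.out : p.Prime)
  obtain ⟨n, rfl⟩ := ZMod.natCast_zmod_surjective x
  have h := natCast_dvd_intCast_zmod_iff (dvd_pow_self p ht) n
  rw [Int.natCast_dvd_natCast, Int.cast_natCast] at h
  rw [h, ZMod.isUnit_iff_coprime, Nat.coprime_pow_right_iff (Nat.pos_of_ne_zero ht),
    Nat.coprime_comm, hp.coprime_iff_not_dvd]

lemma isLocalRing_zmod_prime_pow (ht : t ≠ 0) : IsLocalRing (ZMod (p ^ t)) := by
  have : Fact (1 < p ^ t) := ⟨Nat.one_lt_pow ht (Fact.out : p.Prime).one_lt⟩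
  exact IsLocalRing.of_surjective' (PadicInt.toZModPow t) (ZMod.ringHom_surjective _)

theorem ncard_det_eq_zmod_prime_pow (ht : t ≠ 0) {u : ZMod (p ^ t)} (hu : IsUnit u) :
    ({A : Matrix (Fin 2) (Fin 2) (ZMod (p ^ t)) | A.det = u}.ncard : ℤ) =
      (p : ℤ) ^ t * (((p : ℤ) ^ t) ^ 2 - ((p : ℤ) ^ (t - 1)) ^ 2) := by
  have := isLocalRing_zmod_prime_pow (p := p) ht
  have hnonunits : nonunits (ZMod (p ^ t)) = {x | (p : ZMod (p ^ t)) ^ 1 ∣ x} := by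
    ext x
    rw [mem_nonunits_iff, isUnit_zmod_prime_pow_iff_not_dvd ht, not_not, pow_one]
    rfl
  rw [ncard_det_eq_of_isUnit hu, hnonunits, ncard_pow_dvd_zmod (Nat.one_le_iff_ne_zero.mpr ht),
    Nat.card_zmod]
  push_cast
  rfl

lemma isUnit_padicInt_iff_toZMod_ne_zero {x : ℤ_[p]} : IsUnit x ↔ PadicInt.toZMod x ≠ 0 := by
  rw [ne_eq, ← RingHom.mem_ker, PadicInt.ker_toZMod, IsLocalRing.mem_maximalIdeal,
    mem_nonunits_iff, not_not]

lemma isSquare_of_isSquare_toZMod (hp : p ≠ 2) {c : ℤ_[p]} (hc : IsUnit c)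
    (h : IsSquare (PadicInt.toZMod c)) : IsSquare c := by
  obtain ⟨z, hz⟩ := h
  obtain ⟨a, rfl⟩ := ZMod.ringHom_surjective (PadicInt.toZMod (p := p)) z
  have ha : IsUnit (2 * a) := by
    have h2 : (2 : ZMod p) ≠ 0 := Ring.two_ne_zero (by rwa [ZMod.ringChar_zmod_n])
    have ha0 : PadicInt.toZMod a ≠ 0 :=
      left_ne_zero_of_mul (hz ▸ isUnit_padicInt_iff_toZMod_ne_zero.mp hc)
    rw [isUnit_padicInt_iff_toZMod_ne_zero, map_mul, map_ofNat]
    exact mul_ne_zero h2 ha0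
  have hroot : ‖a ^ 2 - c‖ < 1 := by
    rw [← PadicInt.not_isUnit_iff, isUnit_padicInt_iff_toZMod_ne_zero, map_sub, map_pow, hz, sq,
      sub_self]
    exact not_not.mpr rfl
  obtain ⟨b, hb, -⟩ := hensels_lemma (p := p) (F := Polynomial.X ^ 2 - Polynomial.C c) (a := a)
    (by simpa [PadicInt.isUnit_iff.mp ha, one_add_one_eq_two] using hroot)
  exact ⟨b, by simpa [sub_eq_zero, sq, eq_comm] using hb⟩

theorem exists_sq_add_sq_eq_of_isUnit (hp : p ≠ 2) {c : ℤ_[p]} (hc : IsUnit c) :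
    ∃ x y : ℤ_[p], x ^ 2 + y ^ 2 = c := by
  obtain ⟨x₀, y₀, h⟩ := ZMod.sq_add_sq p (PadicInt.toZMod c)
  wlog hx : x₀ ≠ 0 generalizing x₀ y₀
  · refine this y₀ x₀ (by rw [← h, add_comm]) fun hy => isUnit_padicInt_iff_toZMod_ne_zero.mp hc ?_
    rw [← h, not_not.mp hx, hy, sq, zero_mul, add_zero]
  obtain ⟨y, rfl⟩ := ZMod.ringHom_surjective (PadicInt.toZMod (p := p)) y₀
  have hmod : PadicInt.toZMod (c - y ^ 2) = x₀ ^ 2 := by rw [map_sub, map_pow, ← h]; ring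
  obtain ⟨x, hx'⟩ := isSquare_of_isSquare_toZMod hp (c := c - y ^ 2)
    (isUnit_padicInt_iff_toZMod_ne_zero.mpr (hmod ▸ pow_ne_zero 2 hx)) (hmod ▸ IsSquare.sq x₀)
  exact ⟨x, y, by rw [sq x, ← hx', sub_add_cancel]⟩

lemma pow_dvd_sq_iff_of_prime {M : Type*} [CommMonoidWithZero M] [IsCancelMulZero M] {q : M}
    (hq : Prime q) (j : ℕ) (z : M) :
    q ^ j ∣ z ^ 2 ↔ q ^ ((j + 1) / 2) ∣ z := by
  rw [pow_dvd_iff_le_emultiplicity, pow_dvd_iff_le_emultiplicity, emultiplicity_pow hq]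
  cases emultiplicity q z with
  | top => simp
  | coe n => norm_cast; omega

lemma pow_dvd_sq_iff_zmod {j : ℕ} (hj : j ≤ t) (x : ZMod (p ^ t)) :
    (p : ZMod (p ^ t)) ^ j ∣ x ^ 2 ↔ (p : ZMod (p ^ t)) ^ ((j + 1) / 2) ∣ x := by
  obtain ⟨z, rfl⟩ := ZMod.intCast_surjective x
  rw [← Int.cast_pow, pow_dvd_intCast_iff hj, pow_dvd_intCast_iff (by omega),
    pow_dvd_sq_iff_of_prime (Nat.prime_iff_prime_int.mp Fact.out)]

lemma associated_pow_of_dvd_of_not_dvd {j : ℕ} (hj : j < t) {y : ZMod (p ^ t)}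
    (hy : (p : ZMod (p ^ t)) ^ j ∣ y) (hy' : ¬ (p : ZMod (p ^ t)) ^ (j + 1) ∣ y) :
    Associated ((p : ZMod (p ^ t)) ^ j) y := by
  obtain ⟨u, rfl⟩ := hy
  have hu : IsUnit u := by
    rw [isUnit_zmod_prime_pow_iff_not_dvd (Nat.ne_zero_of_lt hj)]
    exact fun h => hy' (pow_succ (p : ZMod (p ^ t)) j ▸ mul_dvd_mul_left _ h)
  exact associated_mul_unit_right _ _ hu

lemma ncard_pow_dvd_sdiff_zmod {j : ℕ} (hj : j < t) :
    ({y : ZMod (p ^ t) | (p : ZMod (p ^ t)) ^ j ∣ y} \ {y | (p : ZMod (p ^ t)) ^ (j + 1) ∣ y}).ncard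
      = p ^ (t - (j + 1)) * (p - 1) := by
  have hsub : {y : ZMod (p ^ t) | (p : ZMod (p ^ t)) ^ (j + 1) ∣ y} ⊆
      {y | (p : ZMod (p ^ t)) ^ j ∣ y} := fun y hy => (pow_dvd_pow _ j.le_succ).trans hy
  rw [Set.ncard_sdiff hsub, ncard_pow_dvd_zmod hj.le,
    ncard_pow_dvd_zmod hj, show t - j = t - (j + 1) + 1 by omega, pow_succ, Nat.mul_sub, mul_one]

lemma ncard_mul_eq_zmod {j : ℕ} (hj : j < t) {y c : ZMod (p ^ t)}
    (hy : (p : ZMod (p ^ t)) ^ j ∣ y) (hy' : ¬ (p : ZMod (p ^ t)) ^ (j + 1) ∣ y)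
    (hc : (p : ZMod (p ^ t)) ^ j ∣ c) : {z | y * z = c}.ncard = p ^ j := by
  have hassoc := associated_pow_of_dvd_of_not_dvd hj hy hy'
  have hrange : ((AddMonoidHom.mulLeft y).range : Set (ZMod (p ^ t))) =
      {x | (p : ZMod (p ^ t)) ^ j ∣ x} := by
    ext x
    rw [Set.mem_ofPred_eq, hassoc.dvd_iff_dvd_left]
    exact ⟨fun ⟨z, hz⟩ => ⟨z, hz.symm⟩, fun ⟨z, hz⟩ => ⟨z, hz.symm⟩⟩
  have hcard := ncard_fiber_mul_card_range (AddMonoidHom.mulLeft y) (y := c)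
    (by rwa [← SetLike.mem_coe, hrange])
  rw [← SetLike.coe_sort_coe, Nat.card_coe_set_eq, hrange, ncard_pow_dvd_zmod hj.le,
    Nat.card_zmod] at hcard
  refine Nat.eq_of_mul_eq_mul_right (pow_pos (Fact.out : p.Prime).pos (t - j)) (hcard.trans ?_)
  rw [← pow_add, Nat.add_sub_of_le hj.le]

end PrimePower

section Traceless

lemma mem_tracelessOfDet_fin_two {R : Type*} [CommRing R] {w : R} {C : Matrix (Fin 2) (Fin 2) R} :
    C ∈ tracelessOfDet (Fin 2) w ↔
      C 1 1 = -C 0 0 ∧ C 0 1 * C 1 0 = -w - C 0 0 ^ 2 := by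
  rw [tracelessOfDet, Set.mem_ofPred_eq, trace_fin_two, det_fin_two, eq_neg_iff_add_eq_zero,
    add_comm (C 1 1)]
  refine and_congr_right fun h => ?_
  rw [← eq_neg_iff_add_eq_zero] at h
  constructor <;> intro h'
  · linear_combination -h' + C 0 0 * h
  · linear_combination -h' + C 0 0 * h

lemma ncard_eq_sum_ncard_sdiff_add {α : Type*} [Finite α] {F : ℕ → Set α} (hF : Antitone F)
    (n : ℕ) :
    (F 0).ncard = ∑ j ∈ Finset.range n, (F j \ F (j + 1)).ncard + (F n).ncard := by
  induction n with
  | zero => simp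
  | succ n ih =>
    rw [ih, Finset.sum_range_succ, add_assoc, Set.ncard_sdiff_add_ncard_of_subset (hF n.le_succ)]

variable {p t : ℕ}

/-- The trace-zero `2 × 2` matrices of determinant `w` whose upper-right entry is divisible by
`p ^ j`; the counting is done on the successive differences of this decreasing filtration. -/
def tracelessFiltration (w : ZMod (p ^ t)) (j : ℕ) : Set (Matrix (Fin 2) (Fin 2) (ZMod (p ^ t))) :=
  {C ∈ tracelessOfDet (Fin 2) w | (p : ZMod (p ^ t)) ^ j ∣ C 0 1}

lemma tracelessFiltration_antitone (w : ZMod (p ^ t)) : Antitone (tracelessFiltration w) :=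
  fun _ _ h _ hC => ⟨hC.1, (pow_dvd_pow _ h).trans hC.2⟩

lemma tracelessFiltration_zero (w : ZMod (p ^ t)) :
    tracelessFiltration w 0 = tracelessOfDet (Fin 2) w := by
  simp [tracelessFiltration]

variable [Fact p.Prime]

lemma ncard_tracelessOfDet_row {j : ℕ} (hj : j < t) {w x y : ZMod (p ^ t)}
    (hy : (p : ZMod (p ^ t)) ^ j ∣ y) (hy' : ¬ (p : ZMod (p ^ t)) ^ (j + 1) ∣ y)
    (hc : (p : ZMod (p ^ t)) ^ j ∣ -w - x ^ 2) :
    {C ∈ tracelessOfDet (Fin 2) w | (C 0 0, C 0 1) = (x, y)}.ncard = p ^ j := by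
  have hinj : Function.Injective fun z => !![x, y; z, -x] := fun z z' h => congrFun₂ h 1 0
  rw [← ncard_mul_eq_zmod hj hy hy' hc, ← Set.ncard_image_of_injective _ hinj]
  congr 1
  ext C
  constructor
  · rintro ⟨hC, hrow⟩
    obtain ⟨rfl, rfl⟩ := Prod.mk.inj hrow
    obtain ⟨h11, hdet⟩ := mem_tracelessOfDet_fin_two.mp hC
    exact ⟨C 1 0, hdet, by rw [← h11]; exact (eta_fin_two C).symm⟩
  · rintro ⟨z, hz, rfl⟩
    exact ⟨mem_tracelessOfDet_fin_two.mpr ⟨rfl, hz⟩, rfl⟩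

lemma ncard_tracelessFiltration_sdiff {j : ℕ} (hj : j < t) {w : ZMod (p ^ t)}
    (hw : (p : ZMod (p ^ t)) ^ j ∣ w) :
    (tracelessFiltration w j \ tracelessFiltration w (j + 1)).ncard =
      p ^ (t - (j + 1) / 2) * (p ^ (t - 1) * (p - 1)) := by
  let X : Set (ZMod (p ^ t)) := {x | (p : ZMod (p ^ t)) ^ ((j + 1) / 2) ∣ x}
  let Y : Set (ZMod (p ^ t)) :=
    {y | (p : ZMod (p ^ t)) ^ j ∣ y} \ {y | (p : ZMod (p ^ t)) ^ (j + 1) ∣ y}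
  have hmaps : Set.MapsTo (fun C => (C 0 0, C 0 1))
      (tracelessFiltration w j \ tracelessFiltration w (j + 1)) (X ×ˢ Y) := by
    rintro C ⟨⟨hC, hy⟩, hC'⟩
    refine ⟨(pow_dvd_sq_iff_zmod hj.le _).mp ?_, hy, fun hy' => hC' ⟨hC, hy'⟩⟩
    have hdet := (mem_tracelessOfDet_fin_two.mp hC).2
    exact (dvd_sub_right (dvd_neg.mpr hw)).mp (hdet ▸ hy.mul_right _)
  have hfiber : ∀ v ∈ X ×ˢ Y, {C ∈ tracelessFiltration w j \ tracelessFiltration w (j + 1) |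
      (C 0 0, C 0 1) = v}.ncard = p ^ j := by
    rintro ⟨x, y⟩ ⟨hx, hy, hy'⟩
    rw [← ncard_tracelessOfDet_row hj hy hy'
      (dvd_sub (dvd_neg.mpr hw) ((pow_dvd_sq_iff_zmod hj.le x).mpr hx))]
    congr 1
    ext C
    refine ⟨fun h => ⟨h.1.1.1, h.2⟩, fun ⟨hC, hrow⟩ => ⟨?_, hrow⟩⟩
    obtain ⟨rfl, rfl⟩ := Prod.mk.inj hrow
    exact ⟨⟨hC, hy⟩, fun h => hy' h.2⟩
  rw [ncard_eq_mul_of_ncard_fiber_eq _ hmaps hfiber, Set.ncard_prod, ncard_pow_dvd_zmod (by omega),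
    ncard_pow_dvd_sdiff_zmod hj, show t - 1 = t - (j + 1) + j by omega, pow_add p (t - (j + 1)) j]
  ring

lemma tracelessFiltration_eq_empty {b : ℕ} (hb : Odd b) (hbt : b < t) {w : ZMod (p ^ t)}
    (hw : (p : ZMod (p ^ t)) ^ b ∣ w) (hw' : ¬ (p : ZMod (p ^ t)) ^ (b + 1) ∣ w) :
    tracelessFiltration w (b + 1) = ∅ := by
  rw [Set.eq_empty_iff_forall_notMem]
  rintro C ⟨hC, hy⟩
  have hdet := (mem_tracelessOfDet_fin_two.mp hC).2
  have hyz : (p : ZMod (p ^ t)) ^ (b + 1) ∣ -w - C 0 0 ^ 2 := hdet ▸ hy.mul_right _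
  have hx : (p : ZMod (p ^ t)) ^ b ∣ C 0 0 ^ 2 :=
    (dvd_sub_right (dvd_neg.mpr hw)).mp ((pow_dvd_pow _ b.le_succ).trans hyz)
  have hhalf : (b + 1) / 2 = (b + 1 + 1) / 2 := by
    obtain ⟨k, rfl⟩ := hb
    omega
  rw [pow_dvd_sq_iff_zmod hbt.le, hhalf, ← pow_dvd_sq_iff_zmod hbt] at hx
  exact hw' (dvd_neg.mp ((dvd_sub_left hx).mp hyz))

lemma sub_one_mul_sum_pow_half {R : Type*} [CommRing R] (q : R) {s t : ℕ} (hs : s ≤ t) :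
    (q - 1) * ∑ j ∈ Finset.range (2 * s), q ^ (t - (j + 1) / 2) =
      (q + 1) * (q ^ t - q ^ (t - s)) := by
  induction s with
  | zero => simp
  | succ s ih =>
    rw [show 2 * (s + 1) = 2 * s + 1 + 1 by ring, Finset.sum_range_succ, Finset.sum_range_succ,
      mul_add, mul_add, ih (by omega), show (2 * s + 1) / 2 = s by omega,
      show (2 * s + 1 + 1) / 2 = s + 1 by omega, show t - s = (t - (s + 1)) + 1 by omega]
    ring

theorem ncard_tracelessOfDet {b : ℕ} (hb : Odd b) (hbt : b < t) {w : ZMod (p ^ t)}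
    (hw : (p : ZMod (p ^ t)) ^ b ∣ w) (hw' : ¬ (p : ZMod (p ^ t)) ^ (b + 1) ∣ w) :
    ((tracelessOfDet (Fin 2) w).ncard : ℤ) =
      (p : ℤ) ^ (t - 1) * (p + 1) * ((p : ℤ) ^ t - (p : ℤ) ^ (t - (b + 1) / 2)) := by
  have hlayers : (tracelessOfDet (Fin 2) w).ncard =
      ∑ j ∈ Finset.range (b + 1), p ^ (t - (j + 1) / 2) * (p ^ (t - 1) * (p - 1)) := by
    rw [← tracelessFiltration_zero,
      ncard_eq_sum_ncard_sdiff_add (tracelessFiltration_antitone w) (b + 1),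
      tracelessFiltration_eq_empty hb hbt hw hw', Set.ncard_empty, add_zero]
    refine Finset.sum_congr rfl fun j hj => ?_
    have hjb : j ≤ b := Finset.mem_range_succ_iff.mp hj
    exact ncard_tracelessFiltration_sdiff (hjb.trans_lt hbt) ((pow_dvd_pow _ hjb).trans hw)
  obtain ⟨s, hs⟩ : ∃ s, b + 1 = 2 * s := hb.add_one.exists_two_nsmul _
  rw [hlayers, hs, ← Finset.sum_mul, Nat.mul_div_cancel_left s two_pos]
  push_cast [(Fact.out : p.Prime).one_le]
  linear_combination (p : ℤ) ^ (t - 1) * sub_one_mul_sum_pow_half (p : ℤ) (show s ≤ t by omega)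

end Traceless

section LocalDensity

variable {p t : ℕ} [Fact p.Prime]

lemma isUnit_intCast_zmod_prime_pow {z : ℤ} (ht : t ≠ 0) (hz : ¬ (p : ℤ) ∣ z) :
    IsUnit (z : ZMod (p ^ t)) := by
  rwa [isUnit_zmod_prime_pow_iff_not_dvd ht, natCast_dvd_intCast_zmod_iff (dvd_pow_self p ht)]

lemma not_natCast_dvd_two (hp : p ≠ 2) : ¬ (p : ℤ) ∣ 2 := fun h =>
  hp ((Nat.prime_dvd_prime_iff_eq Fact.out Nat.prime_two).mp (Int.natCast_dvd_natCast.mp h))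

lemma not_dvd_sub_two_of_dvd_add_two (hp : p ≠ 2) {n : ℤ} (h : (p : ℤ) ∣ n + 2) :
    ¬ (p : ℤ) ∣ n - 2 := fun h' => by
  have hdiff : n + 2 - (n - 2) = 2 * 2 := by ring
  have h4 : (p : ℤ) ∣ 2 * 2 := hdiff ▸ dvd_sub h h'
  exact not_natCast_dvd_two hp
    (((Nat.prime_iff_prime_int.mp Fact.out).dvd_or_dvd h4).elim id id)

theorem card_gram_of_isUnit {b : ℕ} (hp : p ≠ 2) (hb : Odd b) (hbt : b < t) {u v : ZMod (p ^ t)}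
    (hu : IsUnit u) (hv : (p : ZMod (p ^ t)) ^ b ∣ v) (hv' : ¬ (p : ZMod (p ^ t)) ^ (b + 1) ∣ v) :
    (Nat.card {X : Matrix (Fin 2) (Fin 4) (ZMod (p ^ t)) // X * Xᵀ = !![u, 0; 0, v]} : ℤ) *
        (p : ℤ) ^ (3 + (b + 1) / 2) =
      (p : ℤ) ^ (5 * t) * ((p : ℤ) + 1) ^ 2 * ((p : ℤ) - 1) * ((p : ℤ) ^ ((b + 1) / 2) - 1) := by
  have ht : t ≠ 0 := Nat.ne_zero_of_lt hbt
  obtain ⟨x, y, hxy⟩ := exists_sq_add_sq_eq_of_isUnit hp (c := -1) isUnit_one.neg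
  have hrs : (PadicInt.toZModPow t x) ^ 2 + (PadicInt.toZModPow t y) ^ 2 = -1 := by
    rw [← map_pow, ← map_pow, ← map_add, hxy, map_neg, map_one]
  have h2 : IsUnit (2 : ZMod (p ^ t)) :=
    mod_cast isUnit_intCast_zmod_prime_pow ht (not_natCast_dvd_two hp)
  let := h2.invertible
  obtain ⟨w, rfl⟩ : u ∣ v := hu.dvd
  rw [hu.dvd_mul_left] at hv hv'
  rw [card_gram_eq_ncard_pairs hrs, ncard_pairs_eq_mul hu, Nat.cast_mul,
    ncard_det_eq_zmod_prime_pow ht hu, ncard_tracelessOfDet hb hbt hv hv']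
  obtain ⟨c, rfl⟩ : ∃ c, t = c + (b + 1) / 2 + 1 := ⟨t - (b + 1) / 2 - 1, by omega⟩
  generalize (b + 1) / 2 = s
  rw [Nat.add_sub_cancel, show c + s + 1 - s = c + 1 by omega]
  ring

end LocalDensity

theorem local_density_ramified_odd_general (n : ℤ) {p : ℕ} [Fact p.Prime] (hp : p ≠ 2)
    {a b : ℕ} {m k : ℤ}
    (hm : n + 2 = m * (p : ℤ) ^ a) (hk : n - 2 = k * (p : ℤ) ^ b)
    (hpm : ¬ (p : ℤ) ∣ m) (hpk : ¬ (p : ℤ) ∣ k)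
    (hab : a ≤ b) (hodd : Odd (a + b)) {t : ℕ} (ht : b < t) :
    (Nat.card {X : Matrix (Fin 2) (Fin 4) (ZMod (p ^ t)) //
        X * Xᵀ = !![(n : ZMod (p ^ t)) + 2, 0; 0, (n : ZMod (p ^ t)) - 2]} : ℤ)
        * (p : ℤ) ^ (3 + (a + b + 1) / 2)
      = (p : ℤ) ^ (5 * t) * ((p : ℤ) + 1) ^ 2 *
          (((a : ℤ) + 1) * ((p : ℤ) - 1) * (p : ℤ) ^ ((a + b + 1) / 2)
            - ((p : ℤ) ^ (a + 1) - 1)) := by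
  obtain rfl : a = 0 := by
    by_contra ha
    exact not_dvd_sub_two_of_dvd_add_two hp (hm ▸ (dvd_pow_self _ ha).mul_left m)
      (hk ▸ (dvd_pow_self _ (by omega)).mul_left k)
  rw [zero_add] at hodd ⊢
  have hu : IsUnit ((n : ZMod (p ^ t)) + 2) := by
    rw [pow_zero, mul_one] at hm
    exact_mod_cast isUnit_intCast_zmod_prime_pow (Nat.ne_zero_of_lt ht) (hm ▸ hpm)
  have hp0 : (p : ℤ) ≠ 0 := mod_cast (Fact.out : p.Prime).ne_zero
  have hv : (p : ZMod (p ^ t)) ^ b ∣ (n : ZMod (p ^ t)) - 2 := by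
    exact_mod_cast (pow_dvd_intCast_iff ht.le (n - 2)).mpr (hk ▸ dvd_mul_left _ k)
  have hv' : ¬ (p : ZMod (p ^ t)) ^ (b + 1) ∣ (n : ZMod (p ^ t)) - 2 := by
    have : ¬ (p : ℤ) ^ (b + 1) ∣ n - 2 := by
      rwa [hk, pow_succ', mul_dvd_mul_iff_right (pow_ne_zero b hp0)]
    rw [← pow_dvd_intCast_iff ht] at this
    exact_mod_cast this
  rw [card_gram_of_isUnit hp hodd ht hu hv hv']
  push_cast
  ring

/-- Ramified local density, odd case: let `n ≥ 3` be odd, `p ≥ 3` prime with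
`p ∣ n² − 4`, write `n + 2 = m p^a`, `n − 2 = k p^b` with `p ∤ mk` and `a ≤ b`.
If `a + b` is odd, then for all sufficiently large `t` the number of `2 × 4`
matrices `X` over `ℤ/p^tℤ` with `X Xᵀ = Gₙ = diag(n+2, n−2)` equals
`p^{5t} (p+1)² ((a+1)(p − 1) p^{(a+b+1)/2} − (p^{a+1} − 1)) / p^{3+(a+b+1)/2}`
(stated here with the denominator cleared). -/
theorem local_density_ramified_odd (n : ℤ) (hodd : Odd n) (hn : 3 ≤ n)
    (p : ℕ) [Fact p.Prime] (hp : 3 ≤ p) (hpn : (p : ℤ) ∣ n ^ 2 - 4)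
    (a b : ℕ) (m k : ℤ)
    (hm : n + 2 = m * (p : ℤ) ^ a) (hk : n - 2 = k * (p : ℤ) ^ b)
    (hpm : ¬ (p : ℤ) ∣ m) (hpk : ¬ (p : ℤ) ∣ k)
    (hab : a ≤ b) (hodd' : Odd (a + b)) :
    ∃ T : ℕ, 1 ≤ T ∧ ∀ t : ℕ, T ≤ t →
      (Nat.card {X : Matrix (Fin 2) (Fin 4) (ZMod (p ^ t)) //
          X * Xᵀ = !![(n : ZMod (p ^ t)) + 2, 0; 0, (n : ZMod (p ^ t)) - 2]} : ℤ)
          * (p : ℤ) ^ (3 + (a + b + 1) / 2)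
        = (p : ℤ) ^ (5 * t) * ((p : ℤ) + 1) ^ 2 *
            (((a : ℤ) + 1) * ((p : ℤ) - 1) * (p : ℤ) ^ ((a + b + 1) / 2)
              - ((p : ℤ) ^ (a + 1) - 1)) :=
  ⟨b + 1, b.succ_pos, fun _ ht =>
    local_density_ramified_odd_general n (by omega) hm hk hpm hpk hab hodd' ht⟩
end
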